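/- arXiv:2211.15032 — 2 statements merged into one kernel-verified Lean document; each statement's English description precedes it below -/
import Mathlib

section
/- Let Sp(2n, ℂ) act diagonally on the direct sum of N copies of its standard representation ℂ^{2n}. Then the algebra of polynomial invariants Sym((ℂ^{2n})^{⊕N})^{Sp(2n)} is generated by the quadratic invariants ω(v_i, v_j) given by the symplectic form paired between the i-th and j-th copies (first fundamental theorem of invariant theory for Sp(2n)). -/
open MvPolynomial

/-- The quadratic invariant `q_{ij}` given by pairing the `i`-th and `j`-th copies of the
standard representation `ℂ^{2n}` with the standard symplectic form `ω(x, y) = x ⬝ J y`. -/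
noncomputable def sympPairPoly (n N : ℕ) (i j : Fin N) :
    MvPolynomial (Fin N × (Fin n ⊕ Fin n)) ℂ :=
  ∑ a : Fin n ⊕ Fin n, ∑ b : Fin n ⊕ Fin n,
    C (Matrix.J (Fin n) ℂ a b) * X (i, a) * X (j, b)

/-- A polynomial `P` on `N` copies of `ℂ^{2n}` is `Sp(2n, ℂ)`-invariant if its values are
unchanged when every copy is acted on by a symplectic matrix. -/
def IsSpInvariant (n N : ℕ) (P : MvPolynomial (Fin N × (Fin n ⊕ Fin n)) ℂ) : Prop :=
  ∀ S ∈ Matrix.symplecticGroup (Fin n) ℂ, ∀ v : Fin N → (Fin n ⊕ Fin n) → ℂ,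
    eval (fun p : Fin N × (Fin n ⊕ Fin n) => S.mulVec (v p.1) p.2) P
      = eval (fun p : Fin N × (Fin n ⊕ Fin n) => v p.1 p.2) P

/-!
Suppose first that there are as many vectors as the dimension `2n`. A generic such family is an
invertible matrix, so the symplectic group acts simply transitively on the families with its Gram
matrix. By Darboux's theorem the generic alternating matrix is the Gram matrix of a family over the
fraction field of its own entries, and evaluating an invariant there exhibits it as a quotient
`φ a / φ b`, where `φ` substitutes the pairings for the entries of an alternating matrix. Darboux's
theorem over the residue fields says that `Spec φ` is surjective; hence a prime element `p` of the
factorial ring of polynomials in these entries divides `a` as soon as `φ p` divides `φ a`, the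
denominator cancels, and the invariant is a polynomial in the pairings.

For any number of vectors, polarize: replacing the vectors of an invariant by linear combinations of
`2n` new ones gives a polynomial in the pairings of the new vectors, and all values of the original
are attained in this way, because every vector is a combination of the `2n` basis vectors. The
adjoint of such a substitution for the Fischer form is again a substitution, and the form is
positive definite over `ℚ`, where the pairings are defined. So an invariant orthogonal to all
polynomials in the pairings is zero after every substitution, hence zero, and any invariant equals
its orthogonal projection to the polynomials in the pairings of bounded degree.
-/

section Gram

open Matrix

variable {ι κ l R S : Type*} [CommRing R] [CommRing S]

/-- The additive group of alternating matrices: skew-symmetric matrices with zero diagonal. The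
condition on the diagonal is listed separately because skew-symmetry does not imply it when `2` is
a zero divisor. -/
def alternatingMatrices (ι R : Type*) [CommRing R] : AddSubgroup (Matrix ι ι R) where
  carrier := {A | (∀ i, A i i = 0) ∧ ∀ i j, A j i = -A i j}
  zero_mem' := ⟨fun _ => rfl, fun _ _ => neg_zero.symm⟩
  add_mem' hA hB :=
    ⟨fun i => by simp [hA.1 i, hB.1 i], fun i j => by simp [hA.2 i j, hB.2 i j, add_comm]⟩
  neg_mem' hA := ⟨fun i => by simp [hA.1 i], fun i j => by simp [hA.2 i j]⟩

lemma map_mem_alternatingMatrices {A : Matrix ι ι R} (hA : A ∈ alternatingMatrices ι R)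
    (f : R →+* S) : A.map f ∈ alternatingMatrices ι S :=
  ⟨fun i => by simp [hA.1 i], fun i j => by simp [hA.2 i j]⟩

/-- The matrix `u vᵀ - v uᵀ` of the decomposable 2-form `u ∧ v`. -/
def wedge (u v : ι → R) : Matrix ι ι R := vecMulVec u v - vecMulVec v u

lemma wedge_apply (u v : ι → R) (i j : ι) : wedge u v i j = u i * v j - v i * u j := rfl

lemma wedge_mem_alternatingMatrices (u v : ι → R) : wedge u v ∈ alternatingMatrices ι R :=
  ⟨fun i => by rw [wedge_apply]; ring, fun i j => by simp only [wedge_apply]; ring⟩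

variable [Fintype l] [DecidableEq l]

/-- The matrix of symplectic pairings of the rows of `M`, that is, of a family of vectors indexed
by `ι` in the standard symplectic space with coordinates indexed by `l ⊕ l`. -/
def symplecticGram (M : Matrix ι (l ⊕ l) R) : Matrix ι ι R := M * J l R * Mᵀ

lemma symplecticGram_eq_sum_wedge (M : Matrix ι (l ⊕ l) R) :
    symplecticGram M = ∑ a, wedge (fun i => M i (.inr a)) (fun i => M i (.inl a)) := by
  ext i j
  simp only [symplecticGram, J, fromBlocks, Matrix.mul_apply, of_apply, Fintype.sum_sum_type,
    Sum.elim_inl, Sum.elim_inr, transpose_apply, Matrix.zero_apply, mul_zero, Finset.sum_const_zero,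
    one_apply, mul_ite, mul_one, Finset.sum_ite_eq', Finset.mem_univ, ↓reduceIte, zero_add,
    Matrix.neg_apply, mul_neg, Finset.sum_neg_distrib, add_zero, neg_mul, Matrix.sum_apply,
    wedge_apply, Finset.sum_sub_distrib]
  ring

lemma symplecticGram_mem_alternatingMatrices (M : Matrix ι (l ⊕ l) R) :
    symplecticGram M ∈ alternatingMatrices ι R := by
  rw [symplecticGram_eq_sum_wedge]
  exact sum_mem fun a _ => wedge_mem_alternatingMatrices _ _

lemma symplecticGram_map (M : Matrix ι (l ⊕ l) R) (f : R →+* S) :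
    symplecticGram (M.map f) = (symplecticGram M).map f := by
  simp only [symplecticGram, Matrix.map_mul, map_J, transpose_map]

lemma symplecticGram_mul [Fintype κ] (A : Matrix ι κ R) (M : Matrix κ (l ⊕ l) R) :
    symplecticGram (A * M) = A * symplecticGram M * Aᵀ := by
  simp only [symplecticGram, transpose_mul, Matrix.mul_assoc]

lemma symplecticGram_mul_of_mem_symplecticGroup (M : Matrix ι (l ⊕ l) R)
    {S : Matrix (l ⊕ l) (l ⊕ l) R} (hS : S ∈ symplecticGroup l R) :
    symplecticGram (M * S) = symplecticGram M :=
  calc M * S * J l R * (M * S)ᵀ = M * (S * J l R * Sᵀ) * Mᵀ := by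
        simp only [transpose_mul, Matrix.mul_assoc]
    _ = M * J l R * Mᵀ := by rw [SymplecticGroup.mem_iff.1 hS]

lemma exists_mem_symplecticGroup_mul_eq {M T : Matrix (l ⊕ l) (l ⊕ l) R} (hM : IsUnit M.det)
    (h : symplecticGram T = symplecticGram M) : ∃ S ∈ symplecticGroup l R, M * S = T := by
  refine ⟨M⁻¹ * T, SymplecticGroup.mem_iff.2 ?_, mul_nonsing_inv_cancel_left M T hM⟩
  calc symplecticGram (M⁻¹ * T) = symplecticGram (M⁻¹ * M) := by
        rw [symplecticGram_mul, h, ← symplecticGram_mul]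
    _ = J l R := by simp [symplecticGram, nonsing_inv_mul M hM]

end Gram

section Darboux

open Matrix

variable {ι l K : Type*} [Field K]

lemma sub_wedge_apply_eq_zero {A : Matrix ι ι K} (hA : A ∈ alternatingMatrices ι K) {i j : ι}
    (hij : A i j ≠ 0) {k : ι} (hk : k = i ∨ k = j ∨ A k = 0) :
    (A - wedge (fun k => (A i j)⁻¹ * A k i) (fun k => A k j)) k = 0 := by
  ext r
  rw [Matrix.sub_apply, wedge_apply, Pi.zero_apply]
  rcases hk with rfl | rfl | hk
  · rw [hA.1, hA.2 k r]
    field_simp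
    ring
  · rw [hA.1, hA.2 i k, hA.2 k r]
    field_simp
    ring
  · simp [hk]

lemma exists_eq_sum_wedge (n : ℕ) {A : Matrix ι ι K} (hA : A ∈ alternatingMatrices ι K)
    {s : Finset ι} (hs : s.card ≤ 2 * n) (hAs : ∀ i ∉ s, A i = 0) :
    ∃ u v : Fin n → ι → K, A = ∑ a, wedge (u a) (v a) := by
  classical
  induction n generalizing A s with
  | zero =>
    obtain rfl : s = ∅ := by simpa using hs
    exact ⟨0, 0, funext fun i => hAs i (by simp)⟩
  | succ n ih =>
    by_cases hA0 : A = 0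
    · exact ⟨0, 0, by ext; simp [hA0, wedge_apply, Matrix.sum_apply]⟩
    obtain ⟨i, j, hij⟩ : ∃ i j, A i j ≠ 0 := by
      by_contra! h
      exact hA0 (Matrix.ext h)
    have hi : i ∈ s := by
      by_contra hi
      exact hij (congrFun (hAs i hi) j)
    have hj : j ∈ s := by
      by_contra hj
      exact hij (by rw [hA.2 j i, hAs j hj, Pi.zero_apply, neg_zero])
    have hji : j ≠ i := by
      rintro rfl
      exact hij (hA.1 j)
    have hcard : ((s.erase i).erase j).card + 2 = s.card := by
      rw [← Finset.card_erase_add_one hi,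
        ← Finset.card_erase_add_one (Finset.mem_erase.2 ⟨hji, hj⟩)]
    set u : ι → K := fun k => (A i j)⁻¹ * A k i
    set v : ι → K := fun k => A k j
    obtain ⟨u', v', huv⟩ := ih (sub_mem hA (wedge_mem_alternatingMatrices u v))
      (s := (s.erase i).erase j) (by omega) fun k hk => sub_wedge_apply_eq_zero hA hij <| by
        grind
    exact ⟨Fin.cons u u', Fin.cons v v', by
      simp only [Fin.sum_univ_succ, Fin.cons_zero, Fin.cons_succ, ← huv, add_sub_cancel]⟩

lemma exists_symplecticGram_eq [Fintype ι] [Fintype l] [DecidableEq l]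
    (h : Fintype.card ι ≤ 2 * Fintype.card l) {A : Matrix ι ι K}
    (hA : A ∈ alternatingMatrices ι K) : ∃ M : Matrix ι (l ⊕ l) K, symplecticGram M = A := by
  obtain ⟨u, v, rfl⟩ := exists_eq_sum_wedge (s := Finset.univ) _ hA h (by simp)
  refine ⟨of fun k => Sum.elim (fun a => v (Fintype.equivFin l a) k)
    (fun a => u (Fintype.equivFin l a) k), ?_⟩
  rw [symplecticGram_eq_sum_wedge]
  exact (Fintype.equivFin l).sum_comp fun a => wedge (u a) (v a)

end Darboux

section EvaluationAtMatrices

variable {K ι κ R S : Type*} [CommRing K] [CommRing R] [Algebra K R] [CommRing S] [Algebra K S]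

/-- Evaluation at the entries of the matrix `V`. -/
noncomputable def aevalMatrix (V : Matrix ι κ R) : MvPolynomial (ι × κ) K →ₐ[K] R :=
  aeval fun p => V p.1 p.2

lemma mvPolynomialX_map_aevalMatrix (V : Matrix ι κ R) :
    (Matrix.mvPolynomialX ι κ K).map (aevalMatrix V) = V := by
  ext i a
  simp [aevalMatrix, Matrix.mvPolynomialX]

lemma algHom_aevalMatrix (f : R →ₐ[K] S) (V : Matrix ι κ R) (P : MvPolynomial (ι × κ) K) :
    f (aevalMatrix V P) = aevalMatrix (V.map f) P :=
  comp_aeval_apply _ _ _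

lemma aevalMatrix_mvPolynomialX (P : MvPolynomial (ι × κ) K) :
    aevalMatrix (Matrix.mvPolynomialX ι κ K) P = P :=
  aeval_X_left_apply P

end EvaluationAtMatrices

section Invariants

open Matrix

variable (K l ι : Type*) [CommRing K] [Fintype l] [DecidableEq l]

/-- The polynomials over `K` in families of vectors indexed by `ι` whose values at families with
coordinates in the `K`-algebra `R` are unchanged by the symplectic group of `R`. The vectors are the
rows of a matrix, so the group acts by right multiplication. -/
def symplecticInvariants (R : Type*) [CommRing R] [Algebra K R] :
    Subalgebra K (MvPolynomial (ι × (l ⊕ l)) K) where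
  carrier := {P | ∀ S ∈ symplecticGroup l R, ∀ V : Matrix ι (l ⊕ l) R,
    aevalMatrix (V * S) P = aevalMatrix V P}
  mul_mem' hP hQ S hS V := by rw [map_mul, map_mul, hP S hS V, hQ S hS V]
  add_mem' hP hQ S hS V := by rw [map_add, map_add, hP S hS V, hQ S hS V]
  algebraMap_mem' c S _ V := by rw [AlgHom.commutes, AlgHom.commutes]

/-- The matrix of the symplectic pairings `ω(v_i, v_j)`, as polynomials in the coordinates of
the family `v`. -/
noncomputable def genericGram : Matrix ι ι (MvPolynomial (ι × (l ⊕ l)) K) :=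
  symplecticGram (mvPolynomialX ι (l ⊕ l) K)

/-- The algebra generated by all symplectic pairings `ω(v_i, v_j)`. -/
noncomputable def pairingAlgebra : Subalgebra K (MvPolynomial (ι × (l ⊕ l)) K) :=
  Algebra.adjoin K (Set.range fun p : ι × ι => genericGram K l ι p.1 p.2)

variable {K l ι} {R : Type*} [CommRing R] [Algebra K R]

lemma genericGram_mem_pairingAlgebra (i j : ι) : genericGram K l ι i j ∈ pairingAlgebra K l ι :=
  Algebra.subset_adjoin ⟨(i, j), rfl⟩

lemma aevalMatrix_genericGram (V : Matrix ι (l ⊕ l) R) (i j : ι) :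
    aevalMatrix V (genericGram K l ι i j) = symplecticGram V i j := by
  conv_rhs => rw [← mvPolynomialX_map_aevalMatrix (K := K) V]
  exact congrFun₂ (symplecticGram_map _ (aevalMatrix V : _ →ₐ[K] R).toRingHom).symm i j

lemma pairingAlgebra_le_symplecticInvariants :
    pairingAlgebra K l ι ≤ symplecticInvariants K l ι R := by
  refine Algebra.adjoin_le ?_
  rintro _ ⟨p, rfl⟩ S hS V
  simp only [aevalMatrix_genericGram, symplecticGram_mul_of_mem_symplecticGroup V hS]

end Invariants

section BaseChange

variable {K l ι R S : Type*} [CommRing K] [Fintype l] [DecidableEq l] [CommRing R] [Algebra K R]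
  [CommRing S] [Algebra K S]

lemma mem_symplecticInvariants_of_separating {P : MvPolynomial (ι × (l ⊕ l)) K}
    (hP : P ∈ symplecticInvariants K l ι S)
    (hR : ∀ r r' : R, (∀ f : R →ₐ[K] S, f r = f r') → r = r') :
    P ∈ symplecticInvariants K l ι R := fun A hA V => hR _ _ fun f => by
  rw [algHom_aevalMatrix, algHom_aevalMatrix, ← hP _ (SymplecticGroup.map_mem hA f) (V.map f),
    Matrix.map_mul]

end BaseChange

section FractionField

open Matrix

lemma eq_of_forall_algHom_away_eq {K τ L : Type*} [Field K] [Infinite K] (s : MvPolynomial τ K)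
    [CommRing L] [Algebra K L] [Algebra (MvPolynomial τ K) L] [IsScalarTower K (MvPolynomial τ K) L]
    [IsLocalization.Away s L] {r r' : L} (h : ∀ f : L →ₐ[K] K, f r = f r') : r = r' := by
  obtain ⟨⟨a, t⟩, hat⟩ := IsLocalization.surj (Submonoid.powers s) (r - r')
  have hsa : s * a = 0 := MvPolynomial.funext fun x => by
    rw [map_mul, map_zero, mul_eq_zero]
    refine or_iff_not_imp_left.2 fun hsx => ?_
    have hunit (y : Submonoid.powers s) : IsUnit (aeval x (y : MvPolynomial τ K)) := by
      obtain ⟨_, k, rfl⟩ := y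
      simpa [aeval_eq_eval] using fun h => absurd h hsx
    have hfa := congrArg (IsLocalization.liftAlgHom hunit : L →ₐ[K] K) hat
    rw [map_mul, map_sub, h, sub_self, zero_mul] at hfa
    simpa [aeval_eq_eval] using hfa.symm
  have hs : IsUnit (algebraMap (MvPolynomial τ K) L s) := IsLocalization.Away.algebraMap_isUnit s
  rw [← sub_eq_zero, ← (IsLocalization.map_units L t).mul_left_eq_zero, hat,
    ← hs.mul_right_eq_zero, ← map_mul, hsa, map_zero]

lemma exists_localizationAway_algHom_injective {K B G m : Type*} [CommRing K] [CommRing B]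
    [Algebra K B] [Field G] [Algebra B G] [IsFractionRing B G] [Algebra K G]
    [IsScalarTower K B G] [Finite m] (c : m → G) :
    ∃ (s : B) (g : Localization.Away s →ₐ[K] G), Function.Injective g ∧ ∀ i, ∃ r, g r = c i := by
  obtain ⟨s, hs⟩ := IsLocalization.exist_integer_multiples_of_finite (nonZeroDivisors B) c
  choose a ha using hs
  have hle : Submonoid.powers (s : B) ≤ nonZeroDivisors B := Submonoid.powers_le.2 s.2
  refine ⟨s, IsLocalization.liftAlgHom (M := Submonoid.powers (s : B))
    (f := IsScalarTower.toAlgHom K B G) fun y => ?_, ?_, fun i => ?_⟩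
  · exact IsLocalization.map_units G (⟨y, hle y.2⟩ : nonZeroDivisors B)
  · refine (IsLocalization.lift_injective_iff _).2 fun x y => ?_
    exact ((IsLocalization.injective _ hle).eq_iff.trans (IsFractionRing.injective B G).eq_iff.symm)
  · refine ⟨IsLocalization.mk' _ (a i) ⟨(s : B), Submonoid.mem_powers _⟩, ?_⟩
    exact (IsLocalization.lift_mk'_spec _ _ _ _).2 ((ha i).trans (Algebra.smul_def _ _))

lemma mem_symplecticInvariants_fractionField {K l ι τ G : Type*} [Field K] [Infinite K] [Fintype l]
    [DecidableEq l] [Finite ι] [Field G] [Algebra K G] [Algebra (MvPolynomial τ K) G]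
    [IsScalarTower K (MvPolynomial τ K) G] [IsFractionRing (MvPolynomial τ K) G]
    {P : MvPolynomial (ι × (l ⊕ l)) K} (hP : P ∈ symplecticInvariants K l ι K) :
    P ∈ symplecticInvariants K l ι G := by
  intro S hS V
  obtain ⟨s, g, hg, hgc⟩ := exists_localizationAway_algHom_injective (K := K)
    (B := MvPolynomial τ K) (Sum.elim (fun p : ι × (l ⊕ l) => V p.1 p.2)
      fun p : (l ⊕ l) × (l ⊕ l) => S p.1 p.2)
  choose c hc using hgc
  obtain ⟨V', rfl⟩ : ∃ V' : Matrix ι (l ⊕ l) (Localization.Away s), V'.map g = V :=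
    ⟨of fun i a => c (.inl (i, a)), Matrix.ext fun i a => hc (.inl (i, a))⟩
  obtain ⟨S', rfl⟩ : ∃ S' : Matrix (l ⊕ l) (l ⊕ l) (Localization.Away s), S'.map g = S :=
    ⟨of fun i a => c (.inr (i, a)), Matrix.ext fun i a => hc (.inr (i, a))⟩
  have hS' : S' ∈ symplecticGroup l (Localization.Away s) := by
    refine SymplecticGroup.mem_iff.2 (Matrix.map_injective hg ?_)
    simpa only [Matrix.map_mul, map_J, transpose_map] using SymplecticGroup.mem_iff.1 hS
  have hP' : P ∈ symplecticInvariants K l ι (Localization.Away s) :=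
    mem_symplecticInvariants_of_separating hP fun _ _ => eq_of_forall_algHom_away_eq s
  rw [← Matrix.map_mul, ← algHom_aevalMatrix, ← algHom_aevalMatrix, hP' S' hS' V']

end FractionField

section Descent

variable {B C : Type*} [CommRing B] [IsDomain B] [CommRing C] {φ : B →+* C}

lemma injective_of_comap_surjective (hφ : Function.Surjective (PrimeSpectrum.comap φ)) :
    Function.Injective φ := by
  obtain ⟨q, hq⟩ := hφ ⊥
  rw [injective_iff_map_eq_zero]
  intro b hb
  have hmem : b ∈ (PrimeSpectrum.comap φ q).asIdeal := by
    simp [PrimeSpectrum.comap_asIdeal, hb]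
  simpa [hq] using hmem

lemma mem_range_of_mul_map_eq_map [UniqueFactorizationMonoid B] [IsDomain C]
    (hφ : Function.Surjective (PrimeSpectrum.comap φ)) {P : C} {a b : B} (hb : b ≠ 0)
    (h : P * φ b = φ a) : P ∈ φ.range := by
  induction b using UniqueFactorizationMonoid.induction_on_prime generalizing a with
  | h₁ => exact absurd rfl hb
  | h₂ u hu =>
    obtain ⟨v, huv⟩ := hu.exists_right_inv
    exact ⟨a * v, by rw [map_mul, ← h, mul_assoc, ← map_mul, huv, map_one, mul_one]⟩
  | h₃ b p hb0 hp ih =>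
    obtain ⟨q, hq⟩ := hφ ⟨Ideal.span {p}, (Ideal.span_singleton_prime hp.ne_zero).2 hp⟩
    have hmem (x : B) : φ x ∈ q.asIdeal ↔ p ∣ x := by
      rw [← Ideal.mem_comap, ← PrimeSpectrum.comap_asIdeal, hq, Ideal.mem_span_singleton]
    obtain ⟨a', rfl⟩ : p ∣ a := by
      rw [← hmem, ← h, map_mul]
      exact Ideal.mul_mem_left _ _ (Ideal.mul_mem_right _ _ ((hmem p).2 dvd_rfl))
    have hp0 : φ p ≠ 0 :=
      (map_ne_zero_iff φ (injective_of_comap_surjective hφ)).2 hp.ne_zero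
    refine ih (a := a') hb0 (mul_left_cancel₀ hp0 ?_)
    rw [← map_mul φ p a', ← h, map_mul]
    ring

end Descent

section SquareCase

open Matrix

variable (K l κ : Type*) [CommRing K] [LinearOrder κ]

/-- The polynomial ring in the entries above the diagonal of a generic alternating matrix. -/
abbrev AlternatingCoordinateRing : Type _ := MvPolynomial {p : κ × κ // p.1 < p.2} K

/-- The generic alternating matrix. -/
noncomputable def genericAlternating : Matrix κ κ (AlternatingCoordinateRing K κ) :=
  of fun i j => if h : i < j then X ⟨(i, j), h⟩ else if h : j < i then -X ⟨(j, i), h⟩ else 0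

variable {K l κ}

lemma genericAlternating_mem_alternatingMatrices :
    genericAlternating K κ ∈ alternatingMatrices κ (AlternatingCoordinateRing K κ) := by
  constructor
  · intro i
    simp [genericAlternating]
  · intro i j
    rcases lt_trichotomy i j with h | rfl | h
    · simp [genericAlternating, h, h.not_gt]
    · simp [genericAlternating]
    · simp [genericAlternating, h, h.not_gt]

variable {R : Type*} [CommRing R] [Algebra K R] [Fintype l] [DecidableEq l]

lemma genericAlternating_map_aeval {A : Matrix κ κ R} (hA : A ∈ alternatingMatrices κ R) :
    (genericAlternating K κ).map (aeval fun p => A p.1.1 p.1.2) = A := by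
  ext i j
  rcases lt_trichotomy i j with h | rfl | h
  · simp [genericAlternating, h]
  · simp [genericAlternating, hA.1]
  · simp [genericAlternating, h, h.not_gt, hA.2 j i]

variable (K l κ) in
/-- The comorphism of the map sending a family of vectors to its matrix of symplectic pairings. -/
noncomputable def gramComorphism :
    AlternatingCoordinateRing K κ →ₐ[K] MvPolynomial (κ × (l ⊕ l)) K :=
  aeval fun p => genericGram K l κ p.1.1 p.1.2

lemma genericAlternating_map_gramComorphism :
    (genericAlternating K κ).map (gramComorphism K l κ) = genericGram K l κ :=
  genericAlternating_map_aeval (symplecticGram_mem_alternatingMatrices _)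

lemma gramComorphism_mem_pairingAlgebra (b : AlternatingCoordinateRing K κ) :
    gramComorphism K l κ b ∈ pairingAlgebra K l κ := by
  have h : (gramComorphism K l κ).range ≤ pairingAlgebra K l κ := by
    rw [gramComorphism, ← Algebra.adjoin_range_eq_range_aeval]
    exact Algebra.adjoin_mono (Set.range_subset_iff.2 fun p => ⟨p.1, rfl⟩)
  exact h ⟨b, rfl⟩

lemma aevalMatrix_gramComorphism [Algebra (AlternatingCoordinateRing K κ) R]
    [IsScalarTower K (AlternatingCoordinateRing K κ) R] {M : Matrix κ (l ⊕ l) R}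
    (hM : symplecticGram M = (genericAlternating K κ).map (algebraMap _ R))
    (b : AlternatingCoordinateRing K κ) :
    aevalMatrix M (gramComorphism K l κ b) = algebraMap _ R b := by
  suffices h : (aevalMatrix M).comp (gramComorphism K l κ) =
      IsScalarTower.toAlgHom K (AlternatingCoordinateRing K κ) R from DFunLike.congr_fun h b
  refine MvPolynomial.algHom_ext fun p => ?_
  simp [gramComorphism, aevalMatrix_genericGram, hM, genericAlternating, p.2]

lemma comap_gramComorphism_surjective [Fintype κ] (h : Fintype.card κ ≤ 2 * Fintype.card l) :
    Function.Surjective (PrimeSpectrum.comap (gramComorphism K l κ).toRingHom) := by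
  intro q
  let L := q.asIdeal.ResidueField
  obtain ⟨M, hM⟩ := exists_symplecticGram_eq (l := l) h (map_mem_alternatingMatrices
    genericAlternating_mem_alternatingMatrices (algebraMap (AlternatingCoordinateRing K κ) L))
  refine ⟨PrimeSpectrum.comap (aevalMatrix M : _ →ₐ[K] L).toRingHom ⊥, ?_⟩
  ext b
  have hb := aevalMatrix_gramComorphism hM b
  simp [PrimeSpectrum.comap_asIdeal, hb, L]

lemma aevalMatrix_eq_algebraMap [Nontrivial K] {G : Type*} [Field G]
    [Algebra K G] [Algebra (MvPolynomial ((l ⊕ l) × (l ⊕ l)) K) G]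
    [IsScalarTower K (MvPolynomial ((l ⊕ l) × (l ⊕ l)) K) G]
    [FaithfulSMul (MvPolynomial ((l ⊕ l) × (l ⊕ l)) K) G]
    {P : MvPolynomial ((l ⊕ l) × (l ⊕ l)) K} (hP : P ∈ symplecticInvariants K l (l ⊕ l) G)
    {T : Matrix (l ⊕ l) (l ⊕ l) G}
    (hT : symplecticGram T = (genericGram K l (l ⊕ l)).map (algebraMap _ G)) :
    aevalMatrix T P = algebraMap _ G P := by
  let ρ := IsScalarTower.toAlgHom K (MvPolynomial ((l ⊕ l) × (l ⊕ l)) K) G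
  have hX : IsUnit ((mvPolynomialX (l ⊕ l) (l ⊕ l) K).map ρ).det := by
    rw [isUnit_iff_ne_zero, ← AlgHom.mapMatrix_apply, ← AlgHom.map_det]
    exact (map_ne_zero_iff ρ (FaithfulSMul.algebraMap_injective _ G)).2
      (det_mvPolynomialX_ne_zero _ _)
  obtain ⟨S, hS, rfl⟩ :=
    exists_mem_symplecticGroup_mul_eq hX (hT.trans (symplecticGram_map _ ρ.toRingHom).symm)
  rw [hP S hS, ← algHom_aevalMatrix, aevalMatrix_mvPolynomialX]
  rfl

lemma exists_mul_gramComorphism_eq [LinearOrder (l ⊕ l)] [IsDomain K] {G : Type*} [Field G]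
    [Algebra K G] [Algebra (MvPolynomial ((l ⊕ l) × (l ⊕ l)) K) G]
    [IsScalarTower K (MvPolynomial ((l ⊕ l) × (l ⊕ l)) K) G]
    [FaithfulSMul (MvPolynomial ((l ⊕ l) × (l ⊕ l)) K) G]
    {P : MvPolynomial ((l ⊕ l) × (l ⊕ l)) K} (hP : P ∈ symplecticInvariants K l (l ⊕ l) G) :
    ∃ a b, b ≠ 0 ∧ P * gramComorphism K l (l ⊕ l) b = gramComorphism K l (l ⊕ l) a := by
  let B := AlternatingCoordinateRing K (l ⊕ l)
  let C := MvPolynomial ((l ⊕ l) × (l ⊕ l)) K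
  let φ : B →ₐ[K] C := gramComorphism K l (l ⊕ l)
  have hcard : Fintype.card (l ⊕ l) ≤ 2 * Fintype.card l := by rw [Fintype.card_sum, two_mul]
  have hinj : Function.Injective ((IsScalarTower.toAlgHom K C G).comp φ).toRingHom :=
    (FaithfulSMul.algebraMap_injective C G).comp
      (injective_of_comap_surjective (comap_gramComorphism_surjective hcard))
  let ψ : FractionRing B →ₐ[K] G := IsFractionRing.liftAlgHom hinj
  have hψ (b : B) : ψ (algebraMap B _ b) = algebraMap C G (φ b) :=
    IsFractionRing.lift_algebraMap hinj b
  obtain ⟨M, hM⟩ := exists_symplecticGram_eq (l := l) hcard (map_mem_alternatingMatrices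
    genericAlternating_mem_alternatingMatrices (algebraMap B (FractionRing B)))
  have hgram : symplecticGram (M.map ψ) = (genericGram K l (l ⊕ l)).map (algebraMap C G) := by
    calc symplecticGram (M.map ψ) = (symplecticGram M).map ψ := symplecticGram_map M ψ.toRingHom
      _ = ((genericAlternating K (l ⊕ l)).map φ).map (algebraMap C G) := by
        rw [hM, Matrix.map_map, Matrix.map_map]
        exact congrArg _ (funext hψ)
      _ = (genericGram K l (l ⊕ l)).map (algebraMap C G) := by
        rw [genericAlternating_map_gramComorphism]
  have hPM : ψ (aevalMatrix M P) = algebraMap C G P := by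
    rw [algHom_aevalMatrix, aevalMatrix_eq_algebraMap hP hgram]
  obtain ⟨⟨a, b⟩, hab⟩ := IsLocalization.surj (nonZeroDivisors B) (aevalMatrix M P)
  refine ⟨a, b, nonZeroDivisors.ne_zero b.2, FaithfulSMul.algebraMap_injective C G ?_⟩
  rw [map_mul, ← hPM, ← hψ, ← hψ, ← map_mul, hab]

end SquareCase

lemma symplecticInvariants_le_pairingAlgebra_square {K l : Type*} [Field K] [Infinite K] [Fintype l]
    [DecidableEq l] : symplecticInvariants K l (l ⊕ l) K ≤ pairingAlgebra K l (l ⊕ l) := by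
  intro P hP
  let _ : LinearOrder (l ⊕ l) := WellOrderingRel.isWellOrder.linearOrder
  obtain ⟨a, b, hb, hab⟩ := exists_mul_gramComorphism_eq
    (mem_symplecticInvariants_fractionField (τ := (l ⊕ l) × (l ⊕ l))
      (G := FractionRing (MvPolynomial ((l ⊕ l) × (l ⊕ l)) K)) hP)
  obtain ⟨c, rfl⟩ := mem_range_of_mul_map_eq_map (comap_gramComorphism_surjective
    (by rw [Fintype.card_sum, two_mul])) hb hab
  exact gramComorphism_mem_pairingAlgebra c

section FischerForm

variable {K σ τ : Type*} [CommRing K]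

/-- The Fischer form: the bilinear form for which the monomials are orthogonal and `X ^ m` has
square `∏ i, (m i)!`. -/
noncomputable def fischerForm : MvPolynomial σ K →ₗ[K] MvPolynomial σ K →ₗ[K] K :=
  (basisMonomials σ K).constr K fun m => (m.prod fun _ k => (k.factorial : K)) • lcoeff K m

lemma fischerForm_monomial (m : σ →₀ ℕ) (c : K) (g : MvPolynomial σ K) :
    fischerForm (monomial m c) g = c * ((m.prod fun _ k => (k.factorial : K)) * coeff m g) := by
  have h : monomial m c = c • basisMonomials σ K m := by simp [smul_monomial]
  rw [h, map_smul, fischerForm, Module.Basis.constr_basis]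
  simp [lcoeff]

lemma fischerForm_eq_sum (f g : MvPolynomial σ K) :
    fischerForm f g =
      ∑ m ∈ f.support, coeff m f * ((m.prod fun _ k => (k.factorial : K)) * coeff m g) := by
  conv_lhs => rw [f.as_sum]
  simp only [map_sum, LinearMap.sum_apply, fischerForm_monomial]

lemma prod_factorial_add_single (m : σ →₀ ℕ) (i : σ) :
    ((m + Finsupp.single i 1).prod fun _ k => (k.factorial : K)) =
      (m.prod fun _ k => (k.factorial : K)) * (m i + 1) := by
  classical
  have herase : (m + Finsupp.single i 1).erase i = m.erase i := by
    ext j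
    by_cases hj : j = i <;> simp [hj]
  rw [← Finsupp.mul_prod_erase' _ i _ (by simp), ← Finsupp.mul_prod_erase' m i _ (by simp), herase]
  simp only [Finsupp.coe_add, Pi.add_apply, Finsupp.single_eq_same, Nat.factorial_succ,
    Nat.cast_mul, Nat.cast_add, Nat.cast_one]
  ring

lemma fischerForm_C (a : K) (g : MvPolynomial σ K) :
    fischerForm (C a) g = a * constantCoeff g := by
  rw [C_apply, fischerForm_monomial, Finsupp.prod_zero_index, one_mul, constantCoeff_eq]

lemma fischerForm_mul_X (f g : MvPolynomial σ K) (i : σ) :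
    fischerForm (f * X i) g = fischerForm f (pderiv i g) := by
  induction f using MvPolynomial.induction_on' with
  | add p q hp hq => simp only [add_mul, map_add, LinearMap.add_apply, hp, hq]
  | monomial m c =>
    rw [X, monomial_mul, fischerForm_monomial, fischerForm_monomial, coeff_pderiv,
      prod_factorial_add_single]
    ring

end FischerForm

section LinearSubstitution

open Matrix

variable {K σ τ : Type*} [CommRing K]

lemma pderiv_bind₁ [Fintype σ] (g : σ → MvPolynomial τ K) (f : MvPolynomial σ K) (j : τ) :
    pderiv j (bind₁ g f) = ∑ i, bind₁ g (pderiv i f) * pderiv j (g i) := by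
  classical
  induction f using MvPolynomial.induction_on with
  | C a => simp
  | add p q hp hq => simp only [map_add, hp, hq, add_mul, Finset.sum_add_distrib]
  | mul_X p k hp =>
    simp only [map_mul, pderiv_mul, bind₁_X_right, hp, map_add, pderiv_X, add_mul,
      Finset.sum_add_distrib, Finset.sum_mul]
    congr 1
    · exact Finset.sum_congr rfl fun _ _ => by ring
    · rw [Finset.sum_eq_single k (fun i _ hik => by simp [Pi.single_eq_of_ne' hik]) (by simp)]
      simp

lemma totalDegree_bind₁_le {g : σ → MvPolynomial τ K} (hg : ∀ i, (g i).totalDegree ≤ 1)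
    (f : MvPolynomial σ K) : (bind₁ g f).totalDegree ≤ f.totalDegree := by
  rw [bind₁, aeval_def, eval₂_eq]
  refine totalDegree_finsetSum_le fun m hm => ?_
  calc _ ≤ (algebraMap K (MvPolynomial τ K) (coeff m f)).totalDegree +
        (∏ i ∈ m.support, g i ^ m i).totalDegree := totalDegree_mul _ _
    _ ≤ 0 + ∑ i ∈ m.support, (g i ^ m i).totalDegree := by
      gcongr
      · exact (totalDegree_C _).le
      · exact totalDegree_finsetProd _ _
    _ ≤ ∑ i ∈ m.support, m i := by
      rw [zero_add]
      gcongr with i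
      exact (totalDegree_pow _ _).trans (mul_le_of_le_one_right' (hg i))
    _ ≤ f.totalDegree := le_totalDegree hm

lemma constantCoeff_bind₁_toMvPolynomial [Fintype τ] (A : Matrix σ τ K) (f : MvPolynomial σ K) :
    constantCoeff (bind₁ A.toMvPolynomial f) = constantCoeff f := by
  suffices h : constantCoeff.comp (bind₁ A.toMvPolynomial : _ →ₐ[K] _).toRingHom = constantCoeff
    from RingHom.congr_fun h f
  ext <;> simp

lemma pderiv_toMvPolynomial [Fintype τ] (A : Matrix σ τ K) (i : σ) (j : τ) :
    pderiv j (A.toMvPolynomial i) = C (A i j) := by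
  classical
  simp [toMvPolynomial, ← C_mul_X_eq_monomial, pderiv_X, Pi.single_apply]

lemma fischerForm_bind₁_toMvPolynomial [Fintype σ] [Fintype τ] (A : Matrix σ τ K)
    (f : MvPolynomial σ K) (g : MvPolynomial τ K) :
    fischerForm (bind₁ A.toMvPolynomial f) g = fischerForm f (bind₁ Aᵀ.toMvPolynomial g) := by
  induction f using MvPolynomial.induction_on generalizing g with
  | C a =>
    rw [algHom_C, algebraMap_eq, fischerForm_C, fischerForm_C, constantCoeff_bind₁_toMvPolynomial]
  | add p q hp hq => simp only [map_add, LinearMap.add_apply, hp, hq]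
  | mul_X p i hp =>
    have hg : pderiv i (bind₁ Aᵀ.toMvPolynomial g) =
      ∑ j, A i j • bind₁ Aᵀ.toMvPolynomial (pderiv j g) := by
      simp only [pderiv_bind₁, pderiv_toMvPolynomial, transpose_apply, smul_eq_C_mul, mul_comm]
    have hX : bind₁ A.toMvPolynomial (p * X i) = ∑ j, A i j • (bind₁ A.toMvPolynomial p * X j) := by
      simp only [map_mul, bind₁_X_right, toMvPolynomial, ← C_mul_X_eq_monomial, Finset.mul_sum,
        smul_eq_C_mul, mul_left_comm]
    simp only [hX, map_sum, map_smul, LinearMap.sum_apply, LinearMap.smul_apply, fischerForm_mul_X,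
      hp, hg]

end LinearSubstitution

section Coeffwise

variable {K σ : Type*} [Field K] [CharZero K]

/-- The additive map applying a `ℚ`-linear functional on `K` to each coefficient. Together, these
maps replace the complex conjugation that makes the Fischer form positive definite over `ℂ`. -/
noncomputable def coeffwise (c : K →ₗ[ℚ] ℚ) : MvPolynomial σ K →+ MvPolynomial σ K where
  toFun := AddMonoidAlgebra.map ((algebraMap ℚ K).toAddMonoidHom.comp c.toAddMonoidHom)
  map_zero' := AddMonoidAlgebra.map_zero _
  map_add' := AddMonoidAlgebra.map_add _

lemma coeff_coeffwise (c : K →ₗ[ℚ] ℚ) (f : MvPolynomial σ K) (m : σ →₀ ℕ) :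
    coeff m (coeffwise c f) = (c (coeff m f) : K) := rfl

lemma totalDegree_coeffwise_le (c : K →ₗ[ℚ] ℚ) (f : MvPolynomial σ K) :
    (coeffwise c f).totalDegree ≤ f.totalDegree :=
  totalDegree_le_of_support_subset fun m hm => by
    rw [mem_support_iff, coeff_coeffwise] at hm
    exact mem_support_iff.2 fun h => hm (by rw [h, map_zero, Rat.cast_zero])

lemma coeffwise_smul_map (c : K →ₗ[ℚ] ℚ) (a : K) (g : MvPolynomial σ ℚ) :
    coeffwise c (a • map (algebraMap ℚ K) g) = (c a : K) • map (algebraMap ℚ K) g := by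
  ext m
  simp only [coeff_coeffwise, coeff_smul, coeff_map, smul_eq_mul]
  rw [mul_comm a, ← Algebra.smul_def, map_smul, smul_eq_mul, Rat.cast_mul, mul_comm]
  rfl

lemma coeffwise_mem_adjoin {s : Set (MvPolynomial σ K)}
    (hs : s ⊆ (map (algebraMap ℚ K) : MvPolynomial σ ℚ →+* _).range) (c : K →ₗ[ℚ] ℚ)
    {f : MvPolynomial σ K} (hf : f ∈ Algebra.adjoin K s) : coeffwise c f ∈ Algebra.adjoin K s := by
  have hrange : Submonoid.closure s ≤
      (map (algebraMap ℚ K) : MvPolynomial σ ℚ →+* _).range.toSubmonoid :=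
    Submonoid.closure_le.2 hs
  rw [← Subalgebra.mem_toSubmodule, Algebra.adjoin_eq_span] at hf ⊢
  induction hf using Submodule.closure_induction with
  | zero => simp
  | add f g _ _ hf hg => rw [map_add]; exact add_mem hf hg
  | smul_mem a g hg =>
    obtain ⟨g, rfl⟩ := hrange hg
    rw [coeffwise_smul_map]
    exact Submodule.smul_mem _ _ (Submodule.subset_span hg)

lemma fischerForm_coeffwise_self (c : K →ₗ[ℚ] ℚ) (f : MvPolynomial σ K) :
    c (fischerForm f (coeffwise c f)) =
      ∑ m ∈ f.support, (m.prod fun _ k => (k.factorial : ℚ)) * c (coeff m f) ^ 2 := by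
  rw [fischerForm_eq_sum, map_sum]
  refine Finset.sum_congr rfl fun m _ => ?_
  have hcast : coeff m f * ((m.prod fun _ k => (k.factorial : K)) * coeff m (coeffwise c f)) =
      ((m.prod fun _ k => (k.factorial : ℚ)) * c (coeff m f)) • coeff m f := by
    rw [coeff_coeffwise, Algebra.smul_def, mul_comm]
    simp [Finsupp.prod]
  rw [hcast, map_smul, smul_eq_mul]
  ring

lemma eq_zero_of_forall_fischerForm_coeffwise_eq_zero {f : MvPolynomial σ K}
    (h : ∀ c : K →ₗ[ℚ] ℚ, fischerForm f (coeffwise c f) = 0) : f = 0 := by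
  ext m
  rw [coeff_zero, ← Module.forall_dual_apply_eq_zero_iff ℚ]
  intro c
  have hpos (m : σ →₀ ℕ) : 0 < m.prod fun _ k => (k.factorial : ℚ) :=
    Finset.prod_pos fun _ _ => by positivity
  have hsum := fischerForm_coeffwise_self c f
  rw [h c, map_zero, eq_comm, Finset.sum_eq_zero_iff_of_nonneg
    fun m _ => mul_nonneg (hpos m).le (sq_nonneg _)] at hsum
  by_cases hm : m ∈ f.support
  · simpa [(hpos m).ne'] using hsum m hm
  · rw [notMem_support_iff.1 hm, map_zero]

end Coeffwise

section OrthogonalProjection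

variable {K V : Type*} [Field K] [AddCommGroup V] [Module K V]

lemma exists_mem_forall_sub_eq_zero (B : V →ₗ[K] V →ₗ[K] K) (W : Submodule K V)
    [FiniteDimensional K W] (hW : ∀ w ∈ W, (∀ z ∈ W, B w z = 0) → w = 0) (v : V) :
    ∃ w ∈ W, ∀ z ∈ W, B (v - w) z = 0 := by
  let T : W →ₗ[K] Module.Dual K W := B.domRestrict₁₂ W W
  have hinj : Function.Injective T := by
    rw [injective_iff_map_eq_zero]
    exact fun w hw => Subtype.ext (hW w w.2 fun z hz => LinearMap.congr_fun hw ⟨z, hz⟩)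
  have hsurj : Function.Surjective T :=
    (LinearMap.injective_iff_surjective_of_finrank_eq_finrank
      Subspace.dual_finrank_eq.symm).1 hinj
  obtain ⟨w, hw⟩ := hsurj ((B v).domRestrict W)
  refine ⟨w, w.2, fun z hz => ?_⟩
  rw [map_sub, LinearMap.sub_apply, sub_eq_zero]
  exact (LinearMap.congr_fun hw ⟨z, hz⟩).symm

end OrthogonalProjection

section RowSubstitution

open Matrix

variable {K ι κ τ R : Type*} [CommRing K] [Fintype κ] [Fintype τ] [DecidableEq τ] [CommRing R]
  [Algebra K R]

/-- The substitution `f(V) ↦ f(A * V)` in polynomials in the entries of a matrix: it replaces the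
rows of `V` by linear combinations of the rows of another matrix. -/
noncomputable def rowSubst (A : Matrix ι κ K) :
    MvPolynomial (ι × τ) K →ₐ[K] MvPolynomial (κ × τ) K :=
  bind₁ (kroneckerMap (· * ·) A 1).toMvPolynomial

lemma rowSubst_X (A : Matrix ι κ K) (p : ι × τ) :
    rowSubst A (X p) = ∑ k, A p.1 k • X (k, p.2) := by
  simp only [rowSubst, bind₁_X_right, toMvPolynomial, ← C_mul_X_eq_monomial, smul_eq_C_mul,
    Fintype.sum_prod_type, kroneckerMap_apply, one_apply, mul_ite, mul_one, mul_zero, C_0, zero_mul,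
    apply_ite (C : K → MvPolynomial (κ × τ) K), ite_mul, Finset.sum_ite_eq, Finset.mem_univ,
    if_true]

lemma aevalMatrix_rowSubst (A : Matrix ι κ K) (V : Matrix κ τ R) (f : MvPolynomial (ι × τ) K) :
    aevalMatrix V (rowSubst A f) = aevalMatrix (A.map (algebraMap K R) * V) f := by
  suffices h : (aevalMatrix V).comp (rowSubst A) = aevalMatrix (A.map (algebraMap K R) * V) from
    DFunLike.congr_fun h f
  refine MvPolynomial.algHom_ext fun p => ?_
  simp [rowSubst_X, aevalMatrix, Matrix.mul_apply, Algebra.smul_def]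

lemma totalDegree_rowSubst_le (A : Matrix ι κ K) (f : MvPolynomial (ι × τ) K) :
    (rowSubst A f).totalDegree ≤ f.totalDegree :=
  totalDegree_bind₁_le (fun _ => toMvPolynomial_totalDegree_le _ _) f

lemma fischerForm_rowSubst [Fintype ι] (A : Matrix ι κ K) (f : MvPolynomial (ι × τ) K)
    (g : MvPolynomial (κ × τ) K) :
    fischerForm (rowSubst A f) g = fischerForm f (rowSubst Aᵀ g) := by
  rw [rowSubst, fischerForm_bind₁_toMvPolynomial, ← kroneckerMap_transpose, transpose_one, rowSubst]

variable {l : Type*} [Fintype l] [DecidableEq l]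

lemma rowSubst_mem_symplecticInvariants (A : Matrix ι κ K) {f : MvPolynomial (ι × (l ⊕ l)) K}
    (hf : f ∈ symplecticInvariants K l ι R) : rowSubst A f ∈ symplecticInvariants K l κ R :=
  fun S hS V => by
    rw [aevalMatrix_rowSubst, aevalMatrix_rowSubst, ← Matrix.mul_assoc, hf S hS]

lemma rowSubst_genericGram (A : Matrix ι κ K) (i j : ι) :
    rowSubst A (genericGram K l ι i j) =
      ∑ k, (∑ k', A i k' • genericGram K l κ k' k) * algebraMap K _ (A j k) := by
  rw [← aevalMatrix_mvPolynomialX (rowSubst A _), aevalMatrix_rowSubst, aevalMatrix_genericGram,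
    symplecticGram_mul]
  simp only [Matrix.mul_apply, map_apply, transpose_apply, genericGram, Algebra.smul_def]

lemma rowSubst_mem_pairingAlgebra (A : Matrix ι κ K) {f : MvPolynomial (ι × (l ⊕ l)) K}
    (hf : f ∈ pairingAlgebra K l ι) : rowSubst A f ∈ pairingAlgebra K l κ := by
  suffices h : pairingAlgebra K l ι ≤ (pairingAlgebra K l κ).comap (rowSubst A) from h hf
  refine Algebra.adjoin_le ?_
  rintro _ ⟨p, rfl⟩
  rw [SetLike.mem_coe, Subalgebra.mem_comap, rowSubst_genericGram]
  exact sum_mem fun k _ => mul_mem (sum_mem fun k' _ =>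
    Subalgebra.smul_mem _ (genericGram_mem_pairingAlgebra k' k) _) (Subalgebra.algebraMap_mem _ _)

end RowSubstitution

section FirstFundamentalTheorem

open Matrix

variable {K l ι : Type*} [Field K] [CharZero K] [Fintype l] [DecidableEq l]

lemma coeffwise_mem_pairingAlgebra (c : K →ₗ[ℚ] ℚ) {f : MvPolynomial (ι × (l ⊕ l)) K}
    (hf : f ∈ pairingAlgebra K l ι) : coeffwise c f ∈ pairingAlgebra K l ι := by
  refine coeffwise_mem_adjoin ?_ c hf
  rintro _ ⟨p, rfl⟩
  refine ⟨genericGram ℚ l ι p.1 p.2, ?_⟩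
  have hX : (mvPolynomialX ι (l ⊕ l) ℚ).map (map (algebraMap ℚ K)) =
      mvPolynomialX ι (l ⊕ l) K := by
    ext
    simp [mvPolynomialX]
  simp only [genericGram, ← hX, symplecticGram_map]
  rfl

variable [Finite ι]

lemma eq_zero_of_forall_pairingAlgebra_fischerForm_eq_zero {f : MvPolynomial (ι × (l ⊕ l)) K}
    (hf : f ∈ symplecticInvariants K l ι K)
    (h : ∀ g ∈ pairingAlgebra K l ι, g.totalDegree ≤ f.totalDegree → fischerForm f g = 0) :
    f = 0 := by
  have := Fintype.ofFinite ι
  have hsubst (A : Matrix ι (l ⊕ l) K) : rowSubst A f = 0 := by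
    have hmem : rowSubst A f ∈ pairingAlgebra K l (l ⊕ l) :=
      symplecticInvariants_le_pairingAlgebra_square (rowSubst_mem_symplecticInvariants A hf)
    refine eq_zero_of_forall_fischerForm_coeffwise_eq_zero fun c => ?_
    rw [fischerForm_rowSubst]
    refine h _ (rowSubst_mem_pairingAlgebra Aᵀ (coeffwise_mem_pairingAlgebra c hmem)) ?_
    calc (rowSubst Aᵀ (coeffwise c (rowSubst A f))).totalDegree
        ≤ (coeffwise c (rowSubst A f)).totalDegree := totalDegree_rowSubst_le _ _
      _ ≤ (rowSubst A f).totalDegree := totalDegree_coeffwise_le _ _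
      _ ≤ f.totalDegree := totalDegree_rowSubst_le _ _
  refine MvPolynomial.funext fun x => ?_
  let A : Matrix ι (l ⊕ l) K := of fun i a => x (i, a)
  calc eval x f = aevalMatrix (A.map (algebraMap K K) * 1) f := by
        rw [Matrix.mul_one]; rfl
    _ = aevalMatrix (1 : Matrix (l ⊕ l) (l ⊕ l) K) (rowSubst A f) :=
        (aevalMatrix_rowSubst _ _ _).symm
    _ = eval x 0 := by rw [hsubst, map_zero, map_zero]

theorem symplecticInvariants_eq_pairingAlgebra :
    symplecticInvariants K l ι K = pairingAlgebra K l ι := by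
  refine le_antisymm (fun P hP => ?_) pairingAlgebra_le_symplecticInvariants
  let W := Subalgebra.toSubmodule (pairingAlgebra K l ι) ⊓
    restrictTotalDegree (ι × (l ⊕ l)) K P.totalDegree
  have : FiniteDimensional K W := Submodule.finiteDimensional_inf_right _ _
  obtain ⟨w, hw, hPw⟩ := exists_mem_forall_sub_eq_zero fischerForm W (fun w hw h =>
    eq_zero_of_forall_fischerForm_coeffwise_eq_zero fun c => h _
      ⟨coeffwise_mem_pairingAlgebra c hw.1, (mem_restrictTotalDegree _ _ _).2 <|
        (totalDegree_coeffwise_le c w).trans ((mem_restrictTotalDegree _ _ _).1 hw.2)⟩) P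
  have hdeg : (P - w).totalDegree ≤ P.totalDegree :=
    (totalDegree_sub _ _).trans (max_le le_rfl ((mem_restrictTotalDegree _ _ _).1 hw.2))
  have hzero : P - w = 0 := eq_zero_of_forall_pairingAlgebra_fischerForm_eq_zero
    (sub_mem hP (pairingAlgebra_le_symplecticInvariants hw.1))
    fun g hg hgd => hPw g ⟨hg, (mem_restrictTotalDegree _ _ _).2 (hgd.trans hdeg)⟩
  exact sub_eq_zero.1 hzero ▸ hw.1

end FirstFundamentalTheorem

section LinearOrder

variable {K l ι : Type*} [CommRing K] [Fintype l] [DecidableEq l] [LinearOrder ι]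

lemma pairingAlgebra_eq_adjoin_lt : pairingAlgebra K l ι =
    Algebra.adjoin K {Q | ∃ i j : ι, i < j ∧ Q = genericGram K l ι i j} := by
  refine le_antisymm (Algebra.adjoin_le ?_) (Algebra.adjoin_le ?_)
  · rintro _ ⟨⟨i, j⟩, rfl⟩
    obtain ⟨hdiag, hskew⟩ : genericGram K l ι ∈ alternatingMatrices ι _ :=
      symplecticGram_mem_alternatingMatrices _
    rcases lt_trichotomy i j with hij | rfl | hji
    · exact Algebra.subset_adjoin ⟨i, j, hij, rfl⟩
    · simp only [hdiag, SetLike.mem_coe, zero_mem]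
    · simp only [hskew j i, SetLike.mem_coe, neg_mem_iff]
      exact Algebra.subset_adjoin ⟨j, i, hji, rfl⟩
  · rintro _ ⟨i, j, -, rfl⟩
    exact genericGram_mem_pairingAlgebra i j

end LinearOrder

lemma sympPairPoly_eq_genericGram (n N : ℕ) (i j : Fin N) :
    sympPairPoly n N i j = genericGram ℂ (Fin n) (Fin N) i j := by
  simp only [sympPairPoly, genericGram, symplecticGram, Matrix.mul_apply, Matrix.transpose_apply,
    Matrix.mvPolynomialX_apply, Finset.sum_mul, ← Matrix.map_J (Fin n) C, Matrix.map_apply]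
  rw [Finset.sum_comm]
  simp only [mul_comm (X (i, _))]

lemma isSpInvariant_iff_mem_symplecticInvariants {n N : ℕ}
    {P : MvPolynomial (Fin N × (Fin n ⊕ Fin n)) ℂ} :
    IsSpInvariant n N P ↔ P ∈ symplecticInvariants ℂ (Fin n) (Fin N) ℂ := by
  have haction (S : Matrix (Fin n ⊕ Fin n) (Fin n ⊕ Fin n) ℂ)
      (V : Matrix (Fin N) (Fin n ⊕ Fin n) ℂ) :
      eval (fun p => S.mulVec (V p.1) p.2) P = aevalMatrix (V * S.transpose) P := by
    rw [aevalMatrix, aeval_eq_eval]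
    congr! 2 with p
    simp only [Matrix.mulVec, dotProduct, Matrix.mul_apply, Matrix.transpose_apply, mul_comm]
  refine ⟨fun hP S hS V => ?_, fun hP S hS v => ?_⟩
  · rw [← S.transpose_transpose, ← haction]
    exact hP _ (SymplecticGroup.transpose_mem hS) V
  · exact (haction S (Matrix.of v)).trans (hP _ (SymplecticGroup.transpose_mem hS) _)

theorem stmt7_general {K l ι : Type*} [Field K] [CharZero K] [Fintype l] [DecidableEq l]
    [Finite ι] [LinearOrder ι] {P : MvPolynomial (ι × (l ⊕ l)) K}
    (hP : P ∈ symplecticInvariants K l ι K) :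
    P ∈ Algebra.adjoin K {Q | ∃ i j : ι, i < j ∧ Q = genericGram K l ι i j} := by
  rwa [← pairingAlgebra_eq_adjoin_lt, ← symplecticInvariants_eq_pairingAlgebra]

/-- First fundamental theorem of invariant theory for `Sp(2n, ℂ)`: the invariants of the
diagonal action on `N` copies of the standard representation are generated as a
`ℂ`-algebra by the quadratic symplectic pairings `q_{ij} = ω(v_i, v_j)`, `i < j`. -/
theorem stmt7 (n N : ℕ) (P : MvPolynomial (Fin N × (Fin n ⊕ Fin n)) ℂ)
    (hP : IsSpInvariant n N P) :
    P ∈ Algebra.adjoin ℂ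
      {Q | ∃ i j : Fin N, i < j ∧ Q = sympPairPoly n N i j} := by
  simp only [sympPairPoly_eq_genericGram]
  exact stmt7_general (isSpInvariant_iff_mem_symplecticInvariants.1 hP)
end

section
/- Let Sp(2n, ℂ) act diagonally on Sym(V) ⊗ Λ(U) where V and U are finite direct sums of copies of the standard representation ℂ^{2n}. Then the invariant superalgebra (Sym(V) ⊗ Λ(U))^{Sp(2n)} is generated by quadratic elements: the symplectic pairings between two (distinct, if both in V) copies of ℂ^{2n} occurring in V or in U. -/
open MvPolynomial TensorProduct

/-- `U = (ℂ^{2n})^{⊕2r}`, realized as functions on `Fin (2r) × (Fin n ⊕ Fin n)`. -/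
abbrev UMod (n r : ℕ) := (Fin (2 * r) × (Fin n ⊕ Fin n)) → ℂ

/-- `Sym(V) ⊗ Λ(U)` with `V = (ℂ^{2n})^{⊕m}`, `U = (ℂ^{2n})^{⊕2r}`. -/
abbrev SymTensorExt (n m r : ℕ) :=
  TensorProduct ℂ (MvPolynomial (Fin m × (Fin n ⊕ Fin n)) ℂ) (ExteriorAlgebra ℂ (UMod n r))

/-- The diagonal action of a `2n × 2n` matrix on `U`. -/
noncomputable def matActU (n r : ℕ) (S : Matrix (Fin n ⊕ Fin n) (Fin n ⊕ Fin n) ℂ) :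
    UMod n r →ₗ[ℂ] UMod n r where
  toFun u := fun p => ∑ a : Fin n ⊕ Fin n, S p.2 a * u (p.1, a)
  map_add' u v := by
    funext p
    simp [mul_add, Finset.sum_add_distrib]
  map_smul' c u := by
    funext p
    simp only [Pi.smul_apply, smul_eq_mul, RingHom.id_apply, Finset.mul_sum]
    exact Finset.sum_congr rfl fun a _ => by ring

/-- The diagonal action of `S` on `Sym(V) ⊗ Λ(U)` by algebra homomorphisms. -/
noncomputable def rho (n m r : ℕ) (S : Matrix (Fin n ⊕ Fin n) (Fin n ⊕ Fin n) ℂ) :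
    SymTensorExt n m r →ₐ[ℂ] SymTensorExt n m r :=
  Algebra.TensorProduct.map
    (aeval fun p : Fin m × (Fin n ⊕ Fin n) =>
      ∑ b : Fin n ⊕ Fin n, C (S b p.2) * X (p.1, b))
    (ExteriorAlgebra.map (matActU n r S))

/-- The standard basis vector of the `j`-th copy of `ℂ^{2n}` inside `U`. -/
noncomputable def eU (n r : ℕ) (j : Fin (2 * r)) (b : Fin n ⊕ Fin n) : UMod n r :=
  Pi.single (j, b) 1

/-- The symplectic pairing between the `i`-th and `j`-th copies of `ℂ^{2n}` in `V`. -/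
noncomputable def qVV (n m r : ℕ) (i j : Fin m) : SymTensorExt n m r :=
  (∑ a : Fin n ⊕ Fin n, ∑ b : Fin n ⊕ Fin n,
    C (Matrix.J (Fin n) ℂ a b) * X (i, a) * X (j, b)) ⊗ₜ 1

/-- The symplectic pairing between the `i`-th copy of `ℂ^{2n}` in `V` and the `j`-th copy
in `U`. -/
noncomputable def qVU (n m r : ℕ) (i : Fin m) (j : Fin (2 * r)) : SymTensorExt n m r :=
  ∑ a : Fin n ⊕ Fin n, ∑ b : Fin n ⊕ Fin n,
    Matrix.J (Fin n) ℂ a b • ((X (i, a) : MvPolynomial (Fin m × (Fin n ⊕ Fin n)) ℂ)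
      ⊗ₜ ExteriorAlgebra.ι ℂ (eU n r j b))

/-- The symplectic pairing between the `i`-th and `j`-th copies of `ℂ^{2n}` in `U`
(including `i = j`). -/
noncomputable def qUU (n m r : ℕ) (i j : Fin (2 * r)) : SymTensorExt n m r :=
  ∑ a : Fin n ⊕ Fin n, ∑ b : Fin n ⊕ Fin n,
    Matrix.J (Fin n) ℂ a b • ((1 : MvPolynomial (Fin m × (Fin n ⊕ Fin n)) ℂ)
      ⊗ₜ (ExteriorAlgebra.ι ℂ (eU n r i a) * ExteriorAlgebra.ι ℂ (eU n r j b)))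

/-- The invariant subalgebra `(Sym(V) ⊗ Λ(U))^{Sp(2n)}`. -/
noncomputable def spInvariants (n m r : ℕ) : Subalgebra ℂ (SymTensorExt n m r) where
  carrier := {x | ∀ S ∈ Matrix.symplecticGroup (Fin n) ℂ, rho n m r S x = x}
  mul_mem' hx hy := fun S hS => by rw [map_mul, hx S hS, hy S hS]
  add_mem' hx hy := fun S hS => by rw [map_add, hx S hS, hy S hS]
  algebraMap_mem' c := fun S hS => (rho n m r S).commutes c

/-
`Sym(V) ⊗ Λ(U)` is a Fock space: multiplication by basis vectors creates, (super)derivatives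
annihilate. On a vector killed by `sp(W)` the Casimir operator of `gl(W)`, shifted by the Euler
operator, equals `-∑ₛₜ ω(t, s) ∘ D(s, t)`, where `ω(t, s)` multiplies by the symplectic pairing
of two copies and `D(s, t)` is the dual second-order contraction. In every degree `k > 0` this
operator is invertible: on words in the creation elements it lifts to `k` plus a positive
semidefinite Hermitian matrix. Contraction lowers the degree and preserves invariants, so
invariants are polynomials in the pairings by induction on the degree. An `Sp(W)`-invariant is
killed by `sp(W)` because the symplectic transvections `1 + t v vᵀ J` act polynomially in `t`,
and the `v vᵀ J` span `sp(W)`.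
-/

section Polynomial

variable {k A : Type*} [Field k] [Infinite k] [Ring A] [Algebra k A]

lemma eq_zero_of_forall_eval_algebraMap_eq_zero {p : Polynomial A}
    (h : ∀ t : k, p.eval (algebraMap k A t) = 0) : p = 0 := by
  ext i
  refine (Module.forall_dual_apply_eq_zero_iff k _).1 fun φ => ?_
  set q : Polynomial k :=
    ∑ j ∈ Finset.range (p.natDegree + 1), Polynomial.monomial j (φ (p.coeff j)) with hq
  have hcoeff : q.coeff i = φ (p.coeff i) := by
    simp only [hq, Polynomial.finsetSum_coeff, Polynomial.coeff_monomial, Finset.sum_ite_eq',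
      Finset.mem_range, Nat.lt_succ_iff]
    split_ifs with hi
    · rfl
    · rw [Polynomial.coeff_eq_zero_of_natDegree_lt (not_le.1 hi), map_zero]
  have hq0 : q = 0 := Polynomial.funext fun t => by
    have hφ := congrArg φ (h t)
    rw [Polynomial.eval_eq_sum_range, map_sum, map_zero] at hφ
    rw [Polynomial.eval_finsetSum, Polynomial.eval_zero, ← hφ]
    refine Finset.sum_congr rfl fun j _ => ?_
    rw [Polynomial.eval_monomial, ← map_pow, ← Algebra.commutes, ← Algebra.smul_def, map_smul,
      smul_eq_mul, mul_comm]
  rw [← hcoeff, hq0, Polynomial.coeff_zero]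

end Polynomial

section Adjoin

variable {R A : Type*} [CommSemiring R] [Semiring A] [Algebra R A]

lemma toSubmodule_adjoin_le_of_mul_mem {s : Set A} {M : Submodule R A} (one_mem : 1 ∈ M)
    (mul_mem : ∀ x ∈ s, ∀ y ∈ M, x * y ∈ M) :
    Subalgebra.toSubmodule (Algebra.adjoin R s) ≤ M :=
  Algebra.adjoin_toSubmodule_le R |>.2 fun _ hx =>
    Submonoid.closure_induction_left one_mem (fun x hx y _ hy => mul_mem x hx y hy) hx

end Adjoin

lemma map_eq_of_le_of_map_eq {k E : Type*} [Field k] [AddCommGroup E] [Module k E]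
    {p q : Submodule k E} [FiniteDimensional k q] {T : E →ₗ[k] E} (hpq : p ≤ q)
    (hq : q.map T = q) (hp : p.map T ≤ p) : p.map T = p := by
  have hTq : ∀ x ∈ q, T x ∈ q := fun x hx => hq.le ⟨x, hx, rfl⟩
  have hinj : Function.Injective (T.restrict hTq) := by
    refine LinearMap.injective_iff_surjective.2 fun ⟨y, hy⟩ => ?_
    obtain ⟨x, hx, hxy⟩ := hq.ge hy
    exact ⟨⟨x, hx⟩, Subtype.ext hxy⟩
  have hTp : ∀ x ∈ p, T x ∈ p := fun x hx => hp ⟨x, hx, rfl⟩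
  have hinj' : Function.Injective (T.restrict hTp) := fun x y hxy =>
    have hTxy : T x = T y := congrArg Subtype.val hxy
    Subtype.ext <| Subtype.mk.inj <|
      @hinj ⟨x, hpq x.2⟩ ⟨y, hpq y.2⟩ (Subtype.ext hTxy)
  have : FiniteDimensional k p := Submodule.finiteDimensional_of_le hpq
  refine le_antisymm hp fun y hy => ?_
  obtain ⟨x, hx⟩ := LinearMap.injective_iff_surjective.1 hinj' ⟨y, hy⟩
  exact ⟨x, x.2, congrArg Subtype.val hx⟩

section SymplecticLieAlgebra

open Matrix

lemma mem_span_range_vecMulVec_self {R W : Type*} [CommRing R] [Invertible (2 : R)] [Finite W]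
    {B : Matrix W W R} (hB : B.IsSymm) :
    B ∈ Submodule.span R (Set.range fun v : W → R => vecMulVec v v) := by
  classical
  have := Fintype.ofFinite W
  set M := Submodule.span R (Set.range fun v : W → R => vecMulVec v v)
  have hself (v : W → R) : vecMulVec v v ∈ M := Submodule.subset_span ⟨v, rfl⟩
  have hpolar (u v : W → R) : vecMulVec u v + vecMulVec v u ∈ M := by
    have h : vecMulVec u v + vecMulVec v u =
        vecMulVec (u + v) (u + v) - vecMulVec u u - vecMulVec v v := by
      rw [add_vecMulVec, vecMulVec_add, vecMulVec_add]
      abel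
    exact h ▸ M.sub_mem (M.sub_mem (hself _) (hself _)) (hself _)
  have htwo : (2 : R) • B ∈ M := by
    have h : (2 : R) • B = ∑ a, (vecMulVec (B.col a) (Pi.single a 1) +
        vecMulVec (Pi.single a 1) (B.col a)) := by
      ext i j
      simp [Matrix.sum_apply, vecMulVec_apply, Pi.single_apply, Finset.sum_add_distrib, two_mul,
        hB.apply i j]
    exact h ▸ M.sum_mem fun a _ => hpolar _ _
  simpa [smul_smul] using M.smul_mem (⅟2) htwo

variable {R W : Type*} [CommRing R] [Fintype W] [DecidableEq W]

lemma mul_add_mul_transpose_eq_zero_of_isSkewAdjoint {J X : Matrix W W R} (hJJ : J * J = -1)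
    (hX : J.IsSkewAdjoint X) : X * J + J * Xᵀ = 0 :=
  calc X * J + J * Xᵀ = X * J - J * Xᵀ * (J * J) := by rw [hJJ]; noncomm_ring
    _ = X * J - J * (Xᵀ * J) * J := by noncomm_ring
    _ = X * J + (J * J) * X * J := by rw [hX]; noncomm_ring
    _ = 0 := by rw [hJJ]; noncomm_ring

lemma isSymm_mul_of_isSkewAdjoint {J X : Matrix W W R} (hJ : Jᵀ = -J) (hJJ : J * J = -1)
    (hX : J.IsSkewAdjoint X) : (X * J).IsSymm := by
  rw [IsSymm, transpose_mul, hJ, neg_mul, neg_eq_iff_add_eq_zero, add_comm,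
    mul_add_mul_transpose_eq_zero_of_isSkewAdjoint hJJ hX]

lemma dotProduct_J_mulVec_self {l : Type*} [Fintype l] [DecidableEq l] (v : l ⊕ l → R) :
    v ⬝ᵥ (J l R *ᵥ v) = 0 := by
  simp [J, fromBlocks_mulVec, neg_mulVec, dotProduct, mul_comm]

lemma one_add_smul_vecMulVec_mul_J_mem_symplecticGroup {l : Type*} [Fintype l] [DecidableEq l]
    (t : R) (v : l ⊕ l → R) :
    1 + t • (vecMulVec v v * J l R) ∈ symplecticGroup l R := by
  set P := vecMulVec v v
  have hP : Pᵀ = P := transpose_vecMulVec v v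
  have hPJP : P * J l R * P = 0 := by
    rw [mul_assoc, mul_vecMulVec, vecMulVec_mul_vecMulVec, dotProduct_J_mulVec_self, zero_smul,
      vecMulVec_zero]
  rw [SymplecticGroup.mem_iff]
  simp only [transpose_add, transpose_one, transpose_smul, transpose_mul, hP, J_transpose]
  calc (1 + t • (P * J l R)) * J l R * (1 + t • (-J l R * P))
      = J l R + t • (P * (J l R * J l R)) - t • (J l R * J l R * P)
        - (t * t) • (P * (J l R * J l R) * (J l R * P)) := by
        simp only [add_mul, mul_add, one_mul, mul_one, smul_mul_assoc, mul_smul_comm, neg_mul,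
          mul_neg, smul_neg, smul_smul, mul_assoc, smul_add]
        abel
    _ = J l R + (t * t) • (P * J l R * P) := by rw [J_squared]; simp [mul_assoc]
    _ = J l R := by rw [hPJP, smul_zero, add_zero]

end SymplecticLieAlgebra

/-- A colour Fock space: an algebra `A` generated by *creation* elements `create s a` which acts
as the vacuum representation of a colour Weyl algebra, the *annihilation* operators
`annihilate s a` killing the vacuum `1`. The index `s : S` numbers the copies of the space with
basis `W`; two copies commute up to the factor `sign s t`, so a symmetric algebra has `sign = 1`
and an exterior algebra has `sign = -1`. -/
structure FockSpace (R A S W : Type*) [CommRing R] [Ring A] [Algebra R A] [DecidableEq S]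
    [DecidableEq W] where
  create : S → W → A
  annihilate : S → W → Module.End R A
  sign : S → S → R
  sign_mul_sign : ∀ s t, sign s t * sign t s = 1
  create_mul_create : ∀ s a t b, create s a * create t b = sign s t • (create t b * create s a)
  annihilate_create_mul : ∀ s a t b f, annihilate s a (create t b * f) =
    sign t s • (create t b * annihilate s a f) + if s = t ∧ a = b then f else 0
  annihilate_annihilate : ∀ s a t b f,
    annihilate s a (annihilate t b f) = sign s t • annihilate t b (annihilate s a f)
  annihilate_one : ∀ s a, annihilate s a 1 = 0
  adjoin_create : Algebra.adjoin R (Set.range fun p : S × W => create p.1 p.2) = ⊤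

namespace FockSpace

open Matrix

variable {R A S W : Type*} [CommRing R] [Ring A] [Algebra R A] [DecidableEq S] [DecidableEq W]
  (K : FockSpace R A S W)

section Polarization

variable [Fintype S]

/-- Weyl's polarization operator `∑ₛ x_{sa} ∂_{sb}`: these operators span the image of `gl(W)`. -/
def polarization (a b : W) : Module.End R A :=
  ∑ s, LinearMap.mulLeft R (K.create s a) * K.annihilate s b

lemma polarization_apply (a b : W) (f : A) :
    K.polarization a b f = ∑ s, K.create s a * K.annihilate s b f := by
  simp [polarization, LinearMap.sum_apply]

lemma polarization_one (a b : W) : K.polarization a b 1 = 0 := by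
  simp [polarization_apply, K.annihilate_one]

lemma polarization_create_mul (a b : W) (s : S) (d : W) (f : A) :
    K.polarization a b (K.create s d * f) =
      K.create s d * K.polarization a b f + if b = d then K.create s a * f else 0 := by
  simp only [polarization_apply, K.annihilate_create_mul, mul_add, Finset.sum_add_distrib,
    Finset.mul_sum, mul_ite, mul_zero]
  congr 1
  · refine Finset.sum_congr rfl fun t _ => ?_
    rw [mul_smul_comm, ← mul_assoc, K.create_mul_create t a s d, smul_mul_assoc, smul_smul,
      K.sign_mul_sign, one_smul, mul_assoc]
  · simp [ite_and]

lemma polarization_annihilate (a b : W) (s : S) (d : W) (f : A) :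
    K.polarization a b (K.annihilate s d f) =
      K.annihilate s d (K.polarization a b f) - if d = a then K.annihilate s b f else 0 := by
  have hδ : ∑ t, (if s = t ∧ d = a then K.annihilate t b f else 0) =
      if d = a then K.annihilate s b f else 0 := by
    simp [ite_and]
  simp only [polarization_apply, map_sum, K.annihilate_create_mul, Finset.sum_add_distrib, hδ,
    add_sub_cancel_right]
  exact Finset.sum_congr rfl fun t _ => by rw [K.annihilate_annihilate t b s d, mul_smul_comm]

lemma polarization_polarization (a b c d : W) (f : A) :
    K.polarization b a (K.polarization c d f) =
      ∑ s, ∑ t, K.create t c * K.create s b * K.annihilate s a (K.annihilate t d f) +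
        if a = c then K.polarization b d f else 0 := by
  simp only [K.polarization_apply b a, K.polarization_apply c d, map_sum, K.annihilate_create_mul,
    Finset.sum_add_distrib, mul_add, Finset.mul_sum, mul_ite, mul_zero]
  congr 1
  · refine Finset.sum_congr rfl fun s _ => Finset.sum_congr rfl fun t _ => ?_
    rw [mul_smul_comm, ← mul_assoc, ← smul_mul_assoc, ← K.create_mul_create]
  · simp [ite_and, polarization_apply]

end Polarization

section Pairing

variable [Fintype W]

/-- The quadratic element pairing the copies `s` and `t` through the bilinear form `B`. -/
def pairing (B : Matrix W W R) (s t : S) : A :=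
  ∑ a, ∑ b, B a b • (K.create s a * K.create t b)

/-- The second-order operator contracting the copies `s` and `t` through `B`. -/
def contraction (B : Matrix W W R) (s t : S) : Module.End R A :=
  ∑ a, ∑ b, B a b • (K.annihilate s a * K.annihilate t b)

lemma contraction_apply (B : Matrix W W R) (s t : S) (f : A) :
    K.contraction B s t f = ∑ a, ∑ b, B a b • K.annihilate s a (K.annihilate t b f) := by
  simp [contraction, LinearMap.sum_apply]

lemma contraction_zero (s t : S) : K.contraction 0 s t = 0 := by simp [contraction]

lemma pairing_zero (s t : S) : K.pairing 0 s t = 0 := by simp [pairing]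

lemma pairing_comm {B : Matrix W W R} (hB : Bᵀ = -B) (s t : S) :
    K.pairing B s t = -(K.sign s t • K.pairing B t s) := by
  have hBab (a b : W) : B a b = -B b a := congrFun₂ hB b a
  simp only [pairing, Finset.smul_sum, ← Finset.sum_neg_distrib]
  rw [Finset.sum_comm]
  refine Finset.sum_congr rfl fun b _ => Finset.sum_congr rfl fun a _ => ?_
  rw [hBab, K.create_mul_create s a t b, neg_smul, smul_comm]

lemma pairing_self [Invertible (2 : R)] {B : Matrix W W R} (hB : Bᵀ = -B) {s : S}
    (hs : K.sign s s = 1) : K.pairing B s s = 0 := by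
  have hneg : K.pairing B s s = -K.pairing B s s := by
    simpa only [hs, one_smul] using K.pairing_comm hB s s
  have htwo : (2 : R) • K.pairing B s s = 0 := by
    rw [two_smul, ← eq_neg_iff_add_eq_zero, ← hneg]
  simpa [smul_smul] using congrArg (⅟(2 : R) • ·) htwo

lemma pairing_mul_contraction (J : Matrix W W R) (s t : S) (f : A) :
    K.pairing J t s * K.contraction J s t f =
      ∑ a, ∑ b, ∑ c, ∑ d, (J c b * J a d) •
        (K.create t c * K.create s b * K.annihilate s a (K.annihilate t d f)) := by
  have hpair : K.pairing J t s = ∑ b, ∑ c, J c b • (K.create t c * K.create s b) := Finset.sum_comm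
  rw [hpair, contraction_apply, Finset.mul_sum]
  simp only [Finset.sum_mul, Finset.mul_sum, smul_mul_smul_comm]
  refine Finset.sum_congr rfl fun a _ => ?_
  rw [Finset.sum_comm]
  exact Finset.sum_congr rfl fun b _ => Finset.sum_comm

end Pairing

section Action

variable [Fintype S] [Fintype W]

/-- The action of `gl(W)` on the Fock space. -/
def act : Matrix W W R →ₗ[R] Module.End R A :=
  ∑ a, ∑ b, (Matrix.entryLinearMap R R a b).smulRight (K.polarization a b)

lemma act_apply (X : Matrix W W R) (f : A) :
    K.act X f = ∑ a, ∑ b, X a b • K.polarization a b f := by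
  simp [act, LinearMap.sum_apply]

lemma act_one_right (X : Matrix W W R) : K.act X 1 = 0 := by
  simp [act_apply, polarization_one]

lemma act_create_mul (X : Matrix W W R) (s : S) (d : W) (f : A) :
    K.act X (K.create s d * f) =
      K.create s d * K.act X f + ∑ a, X a d • (K.create s a * f) := by
  simp [act_apply, polarization_create_mul, Finset.sum_add_distrib, Finset.mul_sum]

lemma act_annihilate (X : Matrix W W R) (s : S) (d : W) (f : A) :
    K.act X (K.annihilate s d f) =
      K.annihilate s d (K.act X f) - ∑ b, X d b • K.annihilate s b f := by
  simp only [act_apply, polarization_annihilate, smul_sub, Finset.sum_sub_distrib, map_sum,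
    map_smul, smul_ite, smul_zero]
  congr 1
  rw [Finset.sum_comm]
  simp

lemma act_pairing_mul (X B : Matrix W W R) (s t : S) (f : A) :
    K.act X (K.pairing B s t * f) =
      K.pairing B s t * K.act X f + K.pairing (X * B + B * Xᵀ) s t * f := by
  have hleft : ∑ a, ∑ b, ∑ c, (B a b * X c a) • (K.create s c * (K.create t b * f)) =
      ∑ a, ∑ b, ∑ c, (X a c * B c b) • (K.create s a * (K.create t b * f)) := by
    rw [Finset.sum_comm_cycle]
    refine Finset.sum_congr rfl fun _ _ => ?_
    rw [Finset.sum_comm]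
    simp only [mul_comm]
  have hright : ∑ a, ∑ b, ∑ c, (B a b * X c b) • (K.create s a * (K.create t c * f)) =
      ∑ a, ∑ b, ∑ c, (B a c * X b c) • (K.create s a * (K.create t b * f)) :=
    Finset.sum_congr rfl fun _ _ => Finset.sum_comm
  simp only [pairing, Finset.sum_mul, smul_mul_assoc, mul_assoc, map_sum, map_smul,
    act_create_mul, mul_add, smul_add, Finset.sum_add_distrib, Finset.mul_sum, Finset.smul_sum,
    mul_smul_comm, smul_smul, hleft, hright, Matrix.add_apply, Matrix.mul_apply, add_mul,
    Matrix.transpose_apply, add_smul, Finset.sum_smul]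
  abel

lemma act_contraction (X B : Matrix W W R) (s t : S) (f : A) :
    K.act X (K.contraction B s t f) =
      K.contraction B s t (K.act X f) - K.contraction (Xᵀ * B + B * X) s t f := by
  have hleft : ∑ a, ∑ b, ∑ c, (B a b * X a c) • K.annihilate s c (K.annihilate t b f) =
      ∑ a, ∑ b, ∑ c, (X c a * B c b) • K.annihilate s a (K.annihilate t b f) := by
    rw [Finset.sum_comm_cycle]
    refine Finset.sum_congr rfl fun _ _ => ?_
    rw [Finset.sum_comm]
    simp only [mul_comm]
  have hright : ∑ a, ∑ b, ∑ c, (B a b * X b c) • K.annihilate s a (K.annihilate t c f) =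
      ∑ a, ∑ b, ∑ c, (B a c * X c b) • K.annihilate s a (K.annihilate t b f) :=
    Finset.sum_congr rfl fun _ _ => Finset.sum_comm
  simp only [contraction_apply, map_sum, map_smul, act_annihilate, map_sub, smul_sub,
    Finset.sum_sub_distrib, Finset.smul_sum, smul_smul, hleft, hright, Matrix.add_apply,
    Matrix.mul_apply, Matrix.transpose_apply, add_smul, Finset.sum_add_distrib, Finset.sum_smul]
  abel

lemma act_single (a b : W) : K.act (Matrix.single a b 1) = K.polarization a b := by
  ext f
  simp [act_apply, Matrix.single_apply, ite_and]

/-- The vectors killed by the Lie algebra of the bilinear form `J`. -/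
def invariants (J : Matrix W W R) : Submodule R A :=
  ⨅ X : {X // J.IsSkewAdjoint X}, LinearMap.ker (K.act X)

lemma mem_invariants {J : Matrix W W R} {f : A} :
    f ∈ K.invariants J ↔ ∀ X, J.IsSkewAdjoint X → K.act X f = 0 := by
  simp [invariants]

lemma one_mem_invariants (J : Matrix W W R) : 1 ∈ K.invariants J :=
  K.mem_invariants.2 fun X _ => K.act_one_right X

lemma contraction_mem_invariants {J : Matrix W W R} {f : A} (hf : f ∈ K.invariants J) (s t : S) :
    K.contraction J s t f ∈ K.invariants J := by
  refine K.mem_invariants.2 fun X hX => ?_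
  have hXJ : Xᵀ * J + J * X = 0 := by rw [hX, mul_neg, neg_add_cancel]
  simp [act_contraction, hXJ, contraction_zero, K.mem_invariants.1 hf X hX]

lemma pairing_mul_mem_invariants {J : Matrix W W R} (hJJ : J * J = -1) {f : A}
    (hf : f ∈ K.invariants J) (s t : S) : K.pairing J s t * f ∈ K.invariants J := by
  refine K.mem_invariants.2 fun X hX => ?_
  have hXJ := mul_add_mul_transpose_eq_zero_of_isSkewAdjoint hJJ hX
  simp [act_pairing_mul, hXJ, pairing_zero, K.mem_invariants.1 hf X hX]

lemma polarization_eq_of_mem_invariants {J : Matrix W W R} (hJ : Jᵀ = -J) (hJJ : J * J = -1)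
    {f : A} (hf : f ∈ K.invariants J) (a b : W) :
    K.polarization a b f = -∑ c, ∑ d, (J c b * J a d) • K.polarization c d f := by
  have hskew : J.IsSkewAdjoint (Matrix.single a b 1 + J * Matrix.single b a 1 * J) := by
    change _ᵀ * J = J * -_
    simp only [transpose_add, transpose_mul, Matrix.transpose_single, hJ]
    calc _ = Matrix.single b a 1 * J + J * Matrix.single a b 1 * (J * J) := by noncomm_ring
      _ = -(J * Matrix.single a b 1) - (J * J) * Matrix.single b a 1 * J := by
        rw [hJJ]; noncomm_ring
      _ = _ := by noncomm_ring
  have hX := K.mem_invariants.1 hf _ hskew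
  rw [map_add, LinearMap.add_apply, act_single] at hX
  rw [eq_neg_of_add_eq_zero_left hX, act_apply]
  simp [Matrix.mul_apply, Matrix.single_apply, ite_and]

/-- The Casimir operator of `gl(W)`, shifted by the Euler operator. -/
def shiftedCasimir : Module.End R A :=
  ∑ a, ∑ b, K.polarization b a * K.polarization a b + ∑ a, K.polarization a a

lemma shiftedCasimir_apply (f : A) : K.shiftedCasimir f =
    ∑ a, ∑ b, K.polarization b a (K.polarization a b f) + ∑ a, K.polarization a a f := by
  simp [shiftedCasimir, LinearMap.sum_apply]

lemma shiftedCasimir_apply_of_mem_invariants {J : Matrix W W R} (hJ : Jᵀ = -J)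
    (hJJ : J * J = -1) {f : A} (hf : f ∈ K.invariants J) :
    K.shiftedCasimir f = -∑ s, ∑ t, K.pairing J t s * K.contraction J s t f := by
  have horth (b d : W) : ∑ a, J a b * J a d = if b = d then 1 else 0 := by
    have hJtJ : Jᵀ * J = 1 := by rw [hJ, neg_mul, hJJ, neg_neg]
    simpa [Matrix.mul_apply, Matrix.one_apply] using congrFun₂ hJtJ b d
  have hdiag : ∑ a, ∑ b, ∑ c, ∑ d, (J c b * J a d) •
      (if a = c then K.polarization b d f else 0) = ∑ a, K.polarization a a f := by
    calc _ = ∑ a, ∑ b, ∑ d, (J a b * J a d) • K.polarization b d f := by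
          refine Finset.sum_congr rfl fun a _ => Finset.sum_congr rfl fun b _ => ?_
          rw [Finset.sum_comm]
          simp
      _ = ∑ b, ∑ d, (∑ a, J a b * J a d) • K.polarization b d f := by
          simp only [Finset.sum_smul]
          rw [Finset.sum_comm]
          exact Finset.sum_congr rfl fun b _ => Finset.sum_comm
      _ = _ := by simp [horth]
  have hpol (a b : W) : K.polarization b a (K.polarization a b f) =
      -∑ c, ∑ d, (J c b * J a d) • K.polarization b a (K.polarization c d f) := by
    rw [K.polarization_eq_of_mem_invariants hJ hJJ hf a b]
    simp only [map_neg, map_sum, map_smul]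
  have hswap (F : W → W → W → W → S → S → A) : ∑ a, ∑ b, ∑ c, ∑ d, ∑ s, ∑ t, F a b c d s t =
      ∑ s, ∑ t, ∑ a, ∑ b, ∑ c, ∑ d, F a b c d s t := by
    calc _ = ∑ q : W × W × W × W, ∑ p : S × S, F q.1 q.2.1 q.2.2.1 q.2.2.2 p.1 p.2 := by
          simp only [Fintype.sum_prod_type]
      _ = ∑ p : S × S, ∑ q : W × W × W × W, F q.1 q.2.1 q.2.2.1 q.2.2.2 p.1 p.2 :=
          Finset.sum_comm
      _ = _ := by simp only [Fintype.sum_prod_type]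
  simp only [shiftedCasimir_apply, hpol, polarization_polarization, smul_add,
    Finset.sum_add_distrib, Finset.sum_neg_distrib, Finset.smul_sum, hdiag, neg_add,
    neg_add_cancel_right, hswap, pairing_mul_contraction]

end Action

section Filtration

/-- The span of the creation elements. -/
def linearForms : Submodule R A :=
  Submodule.span R (Set.range fun p : S × W => K.create p.1 p.2)

/-- The span of the words of length at most `k` in the creation elements. -/
def filtration (k : ℕ) : Submodule R A :=
  (1 ⊔ K.linearForms) ^ k

lemma create_mem_linearForms (s : S) (a : W) : K.create s a ∈ K.linearForms :=
  Submodule.subset_span ⟨(s, a), rfl⟩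

lemma linearForms_mul_le {p q : Submodule R A} (h : ∀ s a, ∀ f ∈ p, K.create s a * f ∈ q) :
    K.linearForms * p ≤ q := by
  refine Submodule.mul_le.2 fun x hx f hf => ?_
  have hle : K.linearForms ≤ q.comap (LinearMap.mulRight R f) :=
    Submodule.span_le.2 (Set.range_subset_iff.2 fun p => h p.1 p.2 f hf)
  exact hle hx

lemma filtration_zero : K.filtration 0 = 1 := pow_zero _

lemma filtration_succ (k : ℕ) :
    K.filtration (k + 1) = K.filtration k ⊔ K.linearForms * K.filtration k := by
  rw [filtration, pow_succ', Submodule.sup_mul, one_mul, filtration]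

lemma create_mul_mem_filtration {k : ℕ} {f : A} (hf : f ∈ K.filtration k) (s : S) (a : W) :
    K.create s a * f ∈ K.filtration (k + 1) := by
  rw [filtration_succ]
  exact Submodule.mem_sup_right (Submodule.mul_mem_mul (K.create_mem_linearForms s a) hf)

lemma filtration_mono : Monotone K.filtration :=
  monotone_nat_of_le_succ fun k => K.filtration_succ k ▸ le_sup_left

lemma one_le_filtration (k : ℕ) : 1 ≤ K.filtration k :=
  K.filtration_zero ▸ K.filtration_mono k.zero_le

lemma filtration_succ_le (k : ℕ) :
    K.filtration (k + 1) ≤ 1 ⊔ K.linearForms * K.filtration k := by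
  induction k with
  | zero => rw [filtration_succ, filtration_zero]
  | succ k ih =>
    rw [filtration_succ]
    refine sup_le (ih.trans (sup_le_sup_left ?_ _)) le_sup_right
    exact mul_le_mul_right (K.filtration_mono k.le_succ) _

lemma annihilate_eq_zero_of_mem_one {f : A} (hf : f ∈ (1 : Submodule R A)) (s : S) (a : W) :
    K.annihilate s a f = 0 := by
  obtain ⟨r, rfl⟩ := Submodule.mem_one.1 hf
  rw [Algebra.algebraMap_eq_smul_one, map_smul, K.annihilate_one, smul_zero]

lemma annihilate_mem_filtration {k : ℕ} {f : A} (hf : f ∈ K.filtration (k + 1)) (s : S) (a : W) :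
    K.annihilate s a f ∈ K.filtration k := by
  have of_create_mul (k : ℕ)
      (h : ∀ t b, ∀ g ∈ K.filtration k, K.create t b * K.annihilate s a g ∈ K.filtration k) :
      K.filtration (k + 1) ≤ (K.filtration k).comap (K.annihilate s a) := by
    refine (K.filtration_succ_le k).trans (sup_le (fun g hg => ?_)
      (K.linearForms_mul_le fun t b g hg => ?_)) <;> rw [Submodule.mem_comap]
    · rw [K.annihilate_eq_zero_of_mem_one hg]
      exact zero_mem _
    · rw [K.annihilate_create_mul]
      refine add_mem (Submodule.smul_mem _ _ (h t b g hg)) ?_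
      split_ifs
      exacts [hg, zero_mem _]
  induction k generalizing f with
  | zero =>
    refine of_create_mul 0 (fun t b g hg => ?_) hf
    rw [K.annihilate_eq_zero_of_mem_one (K.filtration_zero ▸ hg), mul_zero]
    exact zero_mem _
  | succ k ih => exact of_create_mul _ (fun t b g hg => K.create_mul_mem_filtration (ih hg) t b) hf

lemma contraction_mem_filtration [Fintype W] (J : Matrix W W R) {k : ℕ} {f : A}
    (hf : f ∈ K.filtration (k + 1)) (s t : S) : K.contraction J s t f ∈ K.filtration k := by
  rw [contraction_apply]
  exact sum_mem fun a _ => sum_mem fun b _ => Submodule.smul_mem _ _ <|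
    K.annihilate_mem_filtration
      (K.filtration_mono k.le_succ (K.annihilate_mem_filtration hf t b)) s a

lemma exists_mem_filtration (f : A) : ∃ k, f ∈ K.filtration k := by
  have hdir : Directed (· ≤ ·) K.filtration := K.filtration_mono.directed_le
  suffices h : Subalgebra.toSubmodule (Algebra.adjoin R
      (Set.range fun p : S × W => K.create p.1 p.2)) ≤ ⨆ k, K.filtration k by
    exact (Submodule.mem_iSup_of_directed _ hdir).1 (h (K.adjoin_create.ge Algebra.mem_top))
  refine toSubmodule_adjoin_le_of_mul_mem
    (Submodule.mem_iSup_of_mem 0 (K.one_le_filtration 0 (Submodule.one_le.1 le_rfl))) ?_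
  rintro _ ⟨p, rfl⟩ f hf
  obtain ⟨k, hk⟩ := (Submodule.mem_iSup_of_directed _ hdir).1 hf
  exact Submodule.mem_iSup_of_mem (k + 1) (K.create_mul_mem_filtration hk p.1 p.2)

lemma fg_linearForms [Finite S] [Finite W] : K.linearForms.FG :=
  Submodule.fg_span (Set.finite_range _)

lemma fg_filtration [Finite S] [Finite W] (k : ℕ) : (K.filtration k).FG :=
  (Submodule.FG.sup (Submodule.one_eq_span (R := R) (A := A) ▸ Submodule.fg_span_singleton 1)
    K.fg_linearForms).pow k

end Filtration

section HermitianLift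

open Kronecker

universe u v

variable {𝕜 A : Type*} {S : Type u} {W : Type v} [RCLike 𝕜] [Ring A] [Algebra 𝕜 A] [Fintype S]
  [Fintype W] [DecidableEq S] [DecidableEq W] (K : FockSpace 𝕜 A S W) {ι : Type*} [Fintype ι]
  [DecidableEq ι]

/-- A lift of the action of `gl(W)` on the span of the homogeneous vectors `w i` of degree `d`
to a unitarizable action on the space with basis `ι`. -/
structure IsHermitianLift (w : ι → A) (M : W → W → Matrix ι ι 𝕜) (d : ℕ) : Prop where
  conjTranspose_eq : ∀ a b, (M a b)ᴴ = M b a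
  sum_diag : ∑ a, M a a = (d : 𝕜) • 1
  polarization_eq : ∀ a b i, K.polarization a b (w i) = ∑ j, M a b j i • w j

variable {K} {w : ι → A} {M : W → W → Matrix ι ι 𝕜} {d : ℕ}

lemma IsHermitianLift.one : K.IsHermitianLift (fun _ : ι => 1) (fun _ _ => 0) 0 where
  conjTranspose_eq := by simp
  sum_diag := by simp
  polarization_eq := by simp [polarization_one]

lemma IsHermitianLift.create_mul (h : K.IsHermitianLift w M d) :
    K.IsHermitianLift (fun p : (S × W) × ι => K.create p.1.1 p.1.2 * w p.2)
      (fun a b => (1 : Matrix (S × W) (S × W) 𝕜) ⊗ₖ M a b +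
        ((1 : Matrix S S 𝕜) ⊗ₖ Matrix.single a b 1) ⊗ₖ (1 : Matrix ι ι 𝕜)) (d + 1) where
  conjTranspose_eq a b := by
    simp [conjTranspose_kronecker, h.conjTranspose_eq]
  sum_diag := by
    have hsingle : ∑ a : W, Matrix.single a a (1 : 𝕜) = 1 := by
      ext a b
      simp [Matrix.sum_apply, Matrix.single_apply, Matrix.one_apply, ite_and]
    have hleft : ∑ a, (1 : Matrix (S × W) (S × W) 𝕜) ⊗ₖ M a a = (d : 𝕜) • 1 := by
      calc _ = (1 : Matrix (S × W) (S × W) 𝕜) ⊗ₖ ∑ a, M a a :=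
            (map_sum (kroneckerBilinear (R := 𝕜) 1) _ _).symm
        _ = _ := by rw [h.sum_diag, kronecker_smul, one_kronecker_one]
    have hright : ∑ a : W, ((1 : Matrix S S 𝕜) ⊗ₖ Matrix.single a a 1) ⊗ₖ
        (1 : Matrix ι ι 𝕜) = 1 := by
      calc _ = ((1 : Matrix S S 𝕜) ⊗ₖ ∑ a : W, Matrix.single a a 1) ⊗ₖ (1 : Matrix ι ι 𝕜) :=
            (map_sum ((kroneckerBilinear (R := 𝕜)).flip (1 : Matrix ι ι 𝕜) ∘ₗ
              kroneckerBilinear (R := 𝕜) (1 : Matrix S S 𝕜)) _ _).symm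
        _ = 1 := by rw [hsingle, one_kronecker_one, one_kronecker_one]
    rw [Finset.sum_add_distrib, hleft, hright, Nat.cast_succ, add_smul, one_smul]
  polarization_eq a b := by
    rintro ⟨⟨s, c⟩, i⟩
    rw [polarization_create_mul, h.polarization_eq]
    simp [Fintype.sum_prod_type, Matrix.kroneckerMap_apply, Matrix.one_apply,
      Matrix.single_apply, add_smul, Finset.sum_add_distrib, Finset.mul_sum, ite_and]

variable (K) in
lemma exists_isHermitianLift_pow (k : ℕ) : ∃ (ι : Type (max u v)) (_ : Fintype ι)
    (_ : DecidableEq ι) (w : ι → A) (M : W → W → Matrix ι ι 𝕜),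
    K.IsHermitianLift w M k ∧ Submodule.span 𝕜 (Set.range w) = K.linearForms ^ k := by
  induction k with
  | zero =>
    exact ⟨PUnit, inferInstance, inferInstance, _, _, IsHermitianLift.one, by
      rw [Set.range_const, pow_zero, Submodule.one_eq_span]⟩
  | succ k ih =>
    obtain ⟨ι, _, _, w, M, h, hspan⟩ := ih
    refine ⟨(S × W) × ι, inferInstance, inferInstance, _, _, h.create_mul, ?_⟩
    rw [pow_succ', ← hspan, linearForms, Submodule.span_mul_span, ← Set.image2_mul,
      Set.image2_range]

open ComplexOrder in
lemma IsHermitianLift.map_shiftedCasimir (h : K.IsHermitianLift w M d) (hd : 0 < d) :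
    (Submodule.span 𝕜 (Set.range w)).map K.shiftedCasimir = Submodule.span 𝕜 (Set.range w) := by
  set π := Fintype.linearCombination 𝕜 w with hπ
  set T : Matrix ι ι 𝕜 := ∑ a, ∑ b, M b a * M a b + ∑ a, M a a with hT
  have hpol (a b : W) (v : ι → 𝕜) : K.polarization a b (π v) = π (M a b *ᵥ v) := by
    have hcomp : K.polarization a b ∘ₗ π = π ∘ₗ (M a b).mulVecLin :=
      LinearMap.pi_ext' fun i => LinearMap.ext_ring <| by
        simp [hπ, Fintype.linearCombination_apply, h.polarization_eq]
    exact LinearMap.congr_fun hcomp v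
  have hTπ : K.shiftedCasimir ∘ₗ π = π ∘ₗ T.mulVecLin := by
    refine LinearMap.ext fun v => ?_
    rw [LinearMap.comp_apply, LinearMap.comp_apply, mulVecLin_apply, hT]
    simp only [shiftedCasimir_apply, hpol, add_mulVec, Matrix.sum_mulVec, mulVec_mulVec, map_add,
      map_sum]
  have hpd : T.PosDef := by
    refine PosDef.posSemidef_add
      (posSemidef_sum _ fun a _ => posSemidef_sum _ fun b _ => ?_) ?_
    · rw [← h.conjTranspose_eq a b]
      exact posSemidef_conjTranspose_mul_self _
    · rw [h.sum_diag]
      exact PosDef.one.smul (Nat.cast_pos.2 hd)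
  have hsurj : LinearMap.range T.mulVecLin = ⊤ := LinearMap.range_eq_top.2 <|
    Matrix.mulVec_surjective_iff_isUnit.2 hpd.isUnit
  rw [← Fintype.range_linearCombination, ← hπ, ← LinearMap.range_comp, hTπ,
    LinearMap.range_comp, hsurj, Submodule.map_top]

variable (K) in
lemma map_shiftedCasimir_linearForms_pow_mul_filtration (j k : ℕ) :
    (K.linearForms ^ (j + 1) * K.filtration k).map K.shiftedCasimir =
      K.linearForms ^ (j + 1) * K.filtration k := by
  induction k generalizing j with
  | zero =>
    obtain ⟨ι, _, _, w, M, h, hspan⟩ := K.exists_isHermitianLift_pow (j + 1)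
    rw [filtration_zero, mul_one, ← hspan, h.map_shiftedCasimir j.succ_pos]
  | succ k ih =>
    rw [filtration_succ, Submodule.mul_sup, ← mul_assoc, ← pow_succ, Submodule.map_sup, ih, ih]

end HermitianLift

section FirstFundamentalTheorem

variable {𝕜 A S W : Type*} [RCLike 𝕜] [Ring A] [Algebra 𝕜 A] [Fintype W]
  [DecidableEq S] [DecidableEq W] (K : FockSpace 𝕜 A S W)

/-- The algebra generated by the quadratic elements of the form `J`. -/
def pairingAlgebra (J : Matrix W W 𝕜) : Subalgebra 𝕜 A :=
  Algebra.adjoin 𝕜 (Set.range fun p : S × S => K.pairing J p.1 p.2)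

lemma pairing_mem_pairingAlgebra (J : Matrix W W 𝕜) (s t : S) :
    K.pairing J s t ∈ K.pairingAlgebra J :=
  Algebra.subset_adjoin ⟨(s, t), rfl⟩

variable [Fintype S] {J : Matrix W W 𝕜}

lemma pairingAlgebra_le_invariants (hJJ : J * J = -1) :
    Subalgebra.toSubmodule (K.pairingAlgebra J) ≤ K.invariants J := by
  refine toSubmodule_adjoin_le_of_mul_mem (K.one_mem_invariants J) ?_
  rintro _ ⟨p, rfl⟩ f hf
  exact K.pairing_mul_mem_invariants hJJ hf p.1 p.2

lemma invariants_inf_filtration_le_of_linearForms_mul {k : ℕ}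
    (h : K.invariants J ⊓ K.linearForms * K.filtration k ≤
      Subalgebra.toSubmodule (K.pairingAlgebra J)) :
    K.invariants J ⊓ K.filtration (k + 1) ≤ Subalgebra.toSubmodule (K.pairingAlgebra J) := by
  rintro f ⟨hf, hfk⟩
  obtain ⟨u, hu, v, hv, rfl⟩ := Submodule.mem_sup.1 (K.filtration_succ_le k hfk)
  obtain ⟨c, rfl⟩ := Submodule.mem_one.1 hu
  have hc : algebraMap 𝕜 A c ∈ K.invariants J := by
    rw [Algebra.algebraMap_eq_smul_one]
    exact Submodule.smul_mem _ c (K.one_mem_invariants J)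
  exact add_mem (Subalgebra.algebraMap_mem _ c) (h ⟨(add_mem_cancel_left hc).1 hf, hv⟩)

lemma invariants_inf_filtration_le (hJ : Jᵀ = -J) (hJJ : J * J = -1) (k : ℕ) :
    K.invariants J ⊓ K.filtration k ≤ Subalgebra.toSubmodule (K.pairingAlgebra J) := by
  induction k with
  | zero =>
    rw [filtration_zero]
    exact inf_le_right.trans (Submodule.one_le.2 (one_mem (K.pairingAlgebra J)))
  | succ k ih =>
    refine K.invariants_inf_filtration_le_of_linearForms_mul ?_
    set Q := K.linearForms * K.filtration k
    have hQ : Q ≤ K.filtration (k + 1) := K.filtration_succ k ▸ le_sup_right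
    have hmapQ : Q.map K.shiftedCasimir = Q := by
      simpa using K.map_shiftedCasimir_linearForms_pow_mul_filtration 0 k
    have hlower : (K.invariants J ⊓ Q).map K.shiftedCasimir ≤
        Subalgebra.toSubmodule (K.pairingAlgebra J) := by
      rintro _ ⟨f, ⟨hf, hfQ⟩, rfl⟩
      rw [K.shiftedCasimir_apply_of_mem_invariants hJ hJJ hf]
      exact neg_mem <| sum_mem fun s _ => sum_mem fun t _ =>
        (K.pairingAlgebra J).mul_mem (K.pairing_mem_pairingAlgebra J t s) <| ih
          ⟨K.contraction_mem_invariants hf s t, K.contraction_mem_filtration J (hQ hfQ) s t⟩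
    have hfin : FiniteDimensional 𝕜 Q :=
      Module.Finite.iff_fg.2 (K.fg_linearForms.mul (K.fg_filtration k))
    have hmap : (K.invariants J ⊓ Q).map K.shiftedCasimir = K.invariants J ⊓ Q := by
      refine map_eq_of_le_of_map_eq inf_le_right hmapQ (le_inf ?_ ?_)
      · exact hlower.trans (K.pairingAlgebra_le_invariants hJJ)
      · exact (Submodule.map_mono inf_le_right).trans hmapQ.le
    exact hmap ▸ hlower

theorem toSubmodule_pairingAlgebra_eq_invariants (hJ : Jᵀ = -J) (hJJ : J * J = -1) :
    Subalgebra.toSubmodule (K.pairingAlgebra J) = K.invariants J := by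
  refine le_antisymm (K.pairingAlgebra_le_invariants hJJ) fun f hf => ?_
  obtain ⟨k, hk⟩ := K.exists_mem_filtration f
  exact K.invariants_inf_filtration_le hJ hJJ k ⟨hf, hk⟩

end FirstFundamentalTheorem

section Substitution

variable [Fintype W]

/-- `φ` is the algebra endomorphism induced by the linear substitution `g` of `W`, acting
diagonally on the copies. -/
def IsSubstitution (g : Matrix W W R) (φ : A →ₐ[R] A) : Prop :=
  ∀ s a, φ (K.create s a) = ∑ b, g b a • K.create s b

variable {K}

lemma IsSubstitution.map_pairing {g : Matrix W W R} {φ : A →ₐ[R] A} (h : K.IsSubstitution g φ)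
    (B : Matrix W W R) (s t : S) : φ (K.pairing B s t) = K.pairing (g * B * gᵀ) s t := by
  have hφ : φ (K.pairing B s t) = ∑ a, ∑ b, ∑ c, ∑ d,
      (g c a * B a b * g d b) • (K.create s c * K.create t d) := by
    simp only [pairing, map_sum, map_smul, map_mul, h s, h t, Finset.sum_mul_sum,
      smul_mul_smul_comm, Finset.smul_sum, smul_smul, mul_assoc, mul_left_comm]
  have hpairing : K.pairing (g * B * gᵀ) s t = ∑ c, ∑ d, ∑ b, ∑ a,
      (g c a * B a b * g d b) • (K.create s c * K.create t d) := by
    simp only [pairing, Matrix.mul_apply, transpose_apply, Finset.sum_mul, Finset.sum_smul]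
  rw [hφ, hpairing, Finset.sum_comm_cycle]
  refine Finset.sum_congr rfl fun c _ => ?_
  rw [Finset.sum_comm_cycle]
  exact Finset.sum_congr rfl fun d _ => Finset.sum_comm

variable (K) in
lemma exists_polynomial_eval_eq_substitution [Fintype S] (Y : Matrix W W R) (f : A) :
    ∃ p : Polynomial A, p.coeff 0 = f ∧ p.coeff 1 = K.act Y f ∧
      ∀ (t : R) (φ : A →ₐ[R] A), K.IsSubstitution (1 + t • Y) φ →
        φ f = p.eval (algebraMap R A t) := by
  let M : Submodule R A :=
    { carrier := {f | ∃ p : Polynomial A, p.coeff 0 = f ∧ p.coeff 1 = K.act Y f ∧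
        ∀ (t : R) (φ : A →ₐ[R] A), K.IsSubstitution (1 + t • Y) φ →
          φ f = p.eval (algebraMap R A t)}
      zero_mem' := ⟨0, by simp⟩
      add_mem' := by
        rintro f g ⟨p, hp0, hp1, hp⟩ ⟨q, hq0, hq1, hq⟩
        exact ⟨p + q, by simp [hp0, hq0], by simp [hp1, hq1], fun t φ hφ => by
          simp [hp t φ hφ, hq t φ hφ]⟩
      smul_mem' := by
        rintro r f ⟨p, hp0, hp1, hp⟩
        exact ⟨r • p, by simp [hp0], by simp [hp1], fun t φ hφ => by
          simp [hp t φ hφ, Polynomial.eval_smul]⟩ }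
  suffices h : Subalgebra.toSubmodule (Algebra.adjoin R
      (Set.range fun p : S × W => K.create p.1 p.2)) ≤ M from
    h (K.adjoin_create.ge Algebra.mem_top)
  refine toSubmodule_adjoin_le_of_mul_mem
    ⟨1, by simp, by simp [act_one_right, Polynomial.coeff_one], by simp⟩ ?_
  rintro _ ⟨⟨s, a⟩, rfl⟩ f ⟨p, hp0, hp1, hp⟩
  set y := ∑ b, Y b a • K.create s b
  refine ⟨Polynomial.C (K.create s a) * p + Polynomial.C y * p * Polynomial.X, by simp [hp0],
    ?_, fun t φ hφ => ?_⟩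
  · simp [hp0, hp1, act_create_mul, y, Finset.sum_mul]
  · have hcreate : φ (K.create s a) = K.create s a + t • y := by
      simp [hφ s a, Matrix.add_apply, add_smul, Finset.sum_add_distrib, Matrix.one_apply,
        y, Finset.smul_sum, smul_smul]
    rw [map_mul, hcreate, hp t φ hφ, Polynomial.eval_add, Polynomial.eval_mul_X,
      Polynomial.eval_C_mul, Polynomial.eval_C_mul, add_mul, ← Algebra.commutes,
      ← Algebra.smul_def, smul_mul_assoc]

end Substitution

lemma act_eq_zero_of_forall_substitution_eq {k A S W : Type*} [Field k] [Infinite k] [Ring A]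
    [Algebra k A] [Fintype S] [Fintype W] [DecidableEq S] [DecidableEq W]
    (K : FockSpace k A S W) {Y : Matrix W W k} {φ : k → A →ₐ[k] A}
    (hφ : ∀ t, K.IsSubstitution (1 + t • Y) (φ t)) {f : A} (hf : ∀ t, φ t f = f) :
    K.act Y f = 0 := by
  obtain ⟨p, -, hp1, hp⟩ := K.exists_polynomial_eval_eq_substitution Y f
  have hpf : p - Polynomial.C f = 0 := eq_zero_of_forall_eval_algebraMap_eq_zero fun t : k => by
    rw [Polynomial.eval_sub, ← hp t _ (hφ t), hf, Polynomial.eval_C, sub_self]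
  rw [← hp1, sub_eq_zero.1 hpf, Polynomial.coeff_C_succ]

lemma mem_invariants_of_forall_vecMulVec [Fintype S] [Fintype W] [Invertible (2 : R)]
    {J : Matrix W W R} (hJ : Jᵀ = -J) (hJJ : J * J = -1) {f : A}
    (hf : ∀ v, K.act (vecMulVec v v * J) f = 0) : f ∈ K.invariants J := by
  refine K.mem_invariants.2 fun X hX => ?_
  let T : Matrix W W R →ₗ[R] A := LinearMap.applyₗ f ∘ₗ K.act ∘ₗ LinearMap.mulRight R J
  have hT : Submodule.span R (Set.range fun v : W → R => vecMulVec v v) ≤ LinearMap.ker T :=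
    Submodule.span_le.2 <| Set.range_subset_iff.2 hf
  have hXJ : K.act (X * J * J) f = 0 :=
    hT (mem_span_range_vecMulVec_self (isSymm_mul_of_isSkewAdjoint hJ hJJ hX))
  simpa [mul_assoc, hJJ] using hXJ

section Tensor

open scoped TensorProduct

variable {B T : Type*} [Ring B] [Algebra R B] [DecidableEq T]

/-- The tensor product of two Fock spaces over the same `W`; the copies coming from the two
factors commute with each other. -/
def tensor (K : FockSpace R A S W) (L : FockSpace R B T W) :
    FockSpace R (A ⊗[R] B) (S ⊕ T) W where
  create := Sum.elim (fun s a => K.create s a ⊗ₜ 1) fun t a => 1 ⊗ₜ L.create t a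
  annihilate := Sum.elim (fun s a => (K.annihilate s a).rTensor B) fun t a =>
    (L.annihilate t a).lTensor A
  sign
    | .inl s, .inl s' => K.sign s s'
    | .inr t, .inr t' => L.sign t t'
    | _, _ => 1
  sign_mul_sign := by
    rintro (s | s) (t | t) <;> simp [K.sign_mul_sign, L.sign_mul_sign]
  create_mul_create := by
    rintro (s | s) a (t | t) b
    · simp [K.create_mul_create s a t b, TensorProduct.smul_tmul']
    · simp
    · simp
    · simp [L.create_mul_create s a t b]
  annihilate_create_mul s a t b f := by
    induction f with
    | zero => simp
    | add f g hf hg =>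
      simp only [mul_add, map_add, smul_add, hf, hg]
      split_ifs <;> abel
    | tmul f g =>
      rcases s with s | s <;> rcases t with t | t
      · simp [K.annihilate_create_mul, TensorProduct.add_tmul, TensorProduct.smul_tmul', ite_tmul]
      · simp
      · simp
      · simp [L.annihilate_create_mul, TensorProduct.tmul_add, tmul_ite]
  annihilate_annihilate s a t b f := by
    induction f with
    | zero => simp
    | add f g hf hg => simp only [map_add, smul_add, hf, hg]
    | tmul f g =>
      rcases s with s | s <;> rcases t with t | t
      · simp [K.annihilate_annihilate s a t b, TensorProduct.smul_tmul']
      · simp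
      · simp
      · simp [L.annihilate_annihilate s a t b]
  annihilate_one := by
    rintro (s | s) a
    · simp [Algebra.TensorProduct.one_def, K.annihilate_one]
    · simp [Algebra.TensorProduct.one_def, L.annihilate_one]
  adjoin_create := by
    set C := Algebra.adjoin R (Set.range fun p : (S ⊕ T) × W => Sum.elim
      (fun s a => K.create s a ⊗ₜ[R] (1 : B)) (fun t a => (1 : A) ⊗ₜ L.create t a) p.1 p.2)
    have hleft (f : A) : f ⊗ₜ 1 ∈ C := by
      have hle : ⊤ ≤ C.comap Algebra.TensorProduct.includeLeft := K.adjoin_create.ge.trans <|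
        Algebra.adjoin_le <| Set.range_subset_iff.2 fun p =>
          Algebra.subset_adjoin ⟨(.inl p.1, p.2), rfl⟩
      exact hle Algebra.mem_top
    have hright (g : B) : 1 ⊗ₜ g ∈ C := by
      have hle : ⊤ ≤ C.comap Algebra.TensorProduct.includeRight := L.adjoin_create.ge.trans <|
        Algebra.adjoin_le <| Set.range_subset_iff.2 fun p =>
          Algebra.subset_adjoin ⟨(.inr p.1, p.2), rfl⟩
      exact hle Algebra.mem_top
    refine eq_top_iff.2 fun f _ => ?_
    induction f with
    | zero => exact C.zero_mem
    | add f g hf hg => exact C.add_mem (hf trivial) (hg trivial)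
    | tmul f g => simpa using C.mul_mem (hleft f) (hright g)

end Tensor

end FockSpace

open Matrix in
theorem stmt8_general {𝕜 A S l : Type*} [RCLike 𝕜] [Ring A] [Algebra 𝕜 A] [Finite S]
    [DecidableEq S] [Fintype l] [DecidableEq l] (K : FockSpace 𝕜 A S (l ⊕ l))
    {φ : Matrix (l ⊕ l) (l ⊕ l) 𝕜 → A →ₐ[𝕜] A}
    (hφ : ∀ g ∈ symplecticGroup l 𝕜, K.IsSubstitution g (φ g)) :
    (K.pairingAlgebra (J l 𝕜) : Set A) = {f | ∀ g ∈ symplecticGroup l 𝕜, φ g f = f} := by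
  have := Fintype.ofFinite S
  refine Set.Subset.antisymm (fun f hf g hg => ?_) fun f hf => ?_
  · have hle : K.pairingAlgebra (J l 𝕜) ≤ AlgHom.equalizer (φ g) (AlgHom.id 𝕜 A) := by
      refine Algebra.adjoin_le ?_
      rintro _ ⟨⟨s, t⟩, rfl⟩
      exact ((hφ g hg).map_pairing _ s t).trans (by rw [SymplecticGroup.mem_iff.1 hg]; rfl)
    exact hle hf
  · have hinv : f ∈ K.invariants (J l 𝕜) :=
      K.mem_invariants_of_forall_vecMulVec (J_transpose l 𝕜) (J_squared l 𝕜) fun v =>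
        K.act_eq_zero_of_forall_substitution_eq
          (fun t => hφ _ (one_add_smul_vecMulVec_mul_J_mem_symplecticGroup t v))
          fun t => hf _ (one_add_smul_vecMulVec_mul_J_mem_symplecticGroup t v)
    exact (K.toSubmodule_pairingAlgebra_eq_invariants (J_transpose l 𝕜) (J_squared l 𝕜)).ge hinv

section Models

lemma pderiv_pderiv_comm {σ R : Type*} [CommRing R] (i j : σ) (p : MvPolynomial σ R) :
    pderiv i (pderiv j p) = pderiv j (pderiv i p) := by
  classical
  have hcomm : ⁅(pderiv i : Derivation R (MvPolynomial σ R) (MvPolynomial σ R)),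
      (pderiv j : Derivation R (MvPolynomial σ R) (MvPolynomial σ R))⁆ = 0 :=
    derivation_ext fun k => by
      rw [Derivation.commutator_apply]
      simp [pderiv_X, Pi.single_apply, apply_ite]
  have hp := DFunLike.congr_fun hcomm p
  rwa [Derivation.commutator_apply, Derivation.zero_apply, sub_eq_zero] at hp

variable (R S W : Type*) [CommRing R] [DecidableEq S] [DecidableEq W]

/-- The symmetric algebra of the direct sum, indexed by `S`, of copies of `R ^ W`: creation is
multiplication by a variable and annihilation is the corresponding partial derivative. -/
noncomputable def polynomialFock : FockSpace R (MvPolynomial (S × W) R) S W where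
  create s a := X (s, a)
  annihilate s a := (pderiv (s, a)).toLinearMap
  sign _ _ := 1
  sign_mul_sign _ _ := one_mul 1
  create_mul_create s a t b := by rw [one_smul, mul_comm]
  annihilate_create_mul s a t b f := by
    simp [pderiv_X, Pi.single_apply, eq_comm]
  annihilate_annihilate s a t b f := by
    rw [one_smul]
    exact pderiv_pderiv_comm _ _ f
  annihilate_one s a := pderiv_one
  adjoin_create := adjoin_range_X

/-- The exterior algebra of the direct sum, indexed by `S`, of copies of `R ^ W`: creation is
multiplication by a basis vector and annihilation is contraction with a coordinate. -/
noncomputable def exteriorFock [Fintype S] [Fintype W] :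
    FockSpace R (ExteriorAlgebra R (S × W → R)) S W where
  create s a := ExteriorAlgebra.ι R (Pi.single (s, a) 1)
  annihilate s a := CliffordAlgebra.contractLeft (Q := 0) (LinearMap.proj (s, a))
  sign _ _ := -1
  sign_mul_sign _ _ := by rw [neg_mul_neg, one_mul]
  create_mul_create s a t b := by
    rw [neg_one_smul]
    exact eq_neg_of_add_eq_zero_left (ExteriorAlgebra.ι_add_mul_swap _ _)
  annihilate_create_mul s a t b f := by
    refine (CliffordAlgebra.contractLeft_ι_mul _ _ _).trans ?_
    rw [neg_one_smul, sub_eq_neg_add]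
    simp [Pi.single_apply]
  annihilate_annihilate s a t b f := by
    rw [neg_one_smul]
    exact CliffordAlgebra.contractLeft_comm _ _ f
  annihilate_one s a := CliffordAlgebra.contractLeft_one _ _
  adjoin_create := by
    refine eq_top_iff.2 <| CliffordAlgebra.adjoin_range_ι.ge.trans <|
      Algebra.adjoin_le <| Set.range_subset_iff.2 fun u => ?_
    rw [← (Pi.basisFun R (S × W)).sum_repr u, map_sum]
    refine sum_mem fun p _ => ?_
    rw [map_smul, Pi.basisFun_apply]
    exact Subalgebra.smul_mem _ (Algebra.subset_adjoin (Set.mem_range_self p)) _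

end Models

section SymTensorExt

variable (n m r : ℕ)

/-- The Fock space structure on `Sym(V) ⊗ Λ(U)`. -/
noncomputable def symTensorExtFock :
    FockSpace ℂ (SymTensorExt n m r) (Fin m ⊕ Fin (2 * r)) (Fin n ⊕ Fin n) :=
  (polynomialFock ℂ (Fin m) (Fin n ⊕ Fin n)).tensor
    (exteriorFock ℂ (Fin (2 * r)) (Fin n ⊕ Fin n))

lemma matActU_eU (g : Matrix (Fin n ⊕ Fin n) (Fin n ⊕ Fin n) ℂ) (j : Fin (2 * r))
    (a : Fin n ⊕ Fin n) : matActU n r g (eU n r j a) = ∑ b, g b a • eU n r j b := by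
  ext ⟨k, b⟩
  by_cases hkj : k = j <;>
    simp [matActU, eU, Pi.single_apply, hkj, -Fintype.sum_sum_type]

lemma isSubstitution_rho (g : Matrix (Fin n ⊕ Fin n) (Fin n ⊕ Fin n) ℂ) :
    (symTensorExtFock n m r).IsSubstitution g (rho n m r g) := by
  rintro (i | j) a
  · simp [symTensorExtFock, polynomialFock, FockSpace.tensor, rho, TensorProduct.sum_tmul,
      ← MvPolynomial.smul_eq_C_mul, TensorProduct.smul_tmul', -Fintype.sum_sum_type]
  · have hι : rho n m r g (1 ⊗ₜ ExteriorAlgebra.ι ℂ (eU n r j a)) =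
        ∑ b, g b a • (1 ⊗ₜ ExteriorAlgebra.ι ℂ (eU n r j b)) := by
      simp [rho, matActU_eU, TensorProduct.tmul_sum, -Fintype.sum_sum_type]
    exact hι

lemma qVV_eq_pairing (i j : Fin m) : qVV n m r i j =
    (symTensorExtFock n m r).pairing (Matrix.J (Fin n) ℂ) (.inl i) (.inl j) := by
  simp [qVV, FockSpace.pairing, symTensorExtFock, FockSpace.tensor, polynomialFock,
    TensorProduct.sum_tmul, ← MvPolynomial.smul_eq_C_mul, TensorProduct.smul_tmul',
    -Fintype.sum_sum_type]

lemma qVU_eq_pairing (i : Fin m) (j : Fin (2 * r)) : qVU n m r i j =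
    (symTensorExtFock n m r).pairing (Matrix.J (Fin n) ℂ) (.inl i) (.inr j) := by
  simp [qVU, FockSpace.pairing, symTensorExtFock, FockSpace.tensor, polynomialFock, exteriorFock,
    eU]

lemma qUU_eq_pairing (i j : Fin (2 * r)) : qUU n m r i j =
    (symTensorExtFock n m r).pairing (Matrix.J (Fin n) ℂ) (.inr i) (.inr j) := by
  simp [qUU, FockSpace.pairing, symTensorExtFock, FockSpace.tensor, exteriorFock, eU]

lemma adjoin_quadratic_eq_pairingAlgebra :
    Algebra.adjoin ℂ
      ({x | ∃ i j : Fin m, i ≠ j ∧ x = qVV n m r i j} ∪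
       {x | ∃ (i : Fin m) (j : Fin (2 * r)), x = qVU n m r i j} ∪
       {x | ∃ i j : Fin (2 * r), x = qUU n m r i j})
      = (symTensorExtFock n m r).pairingAlgebra (Matrix.J (Fin n) ℂ) := by
  refine le_antisymm (Algebra.adjoin_le ?_) (Algebra.adjoin_le ?_)
  · rintro x ((⟨i, j, -, rfl⟩ | ⟨i, j, rfl⟩) | ⟨i, j, rfl⟩)
    · rw [qVV_eq_pairing]
      exact FockSpace.pairing_mem_pairingAlgebra _ _ _ _
    · rw [qVU_eq_pairing]
      exact FockSpace.pairing_mem_pairingAlgebra _ _ _ _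
    · rw [qUU_eq_pairing]
      exact FockSpace.pairing_mem_pairingAlgebra _ _ _ _
  · have hJ := Matrix.J_transpose (Fin n) ℂ
    simp only [Set.range_subset_iff, Prod.forall, Sum.forall, ← qVV_eq_pairing, ← qVU_eq_pairing,
      ← qUU_eq_pairing]
    refine ⟨fun i => ⟨fun j => ?_, fun j => ?_⟩, fun i => ⟨fun j => ?_, fun j => ?_⟩⟩
    · obtain rfl | hij := eq_or_ne i j
      · rw [qVV_eq_pairing, FockSpace.pairing_self _ hJ rfl]
        exact zero_mem _
      · exact Algebra.subset_adjoin (.inl (.inl ⟨i, j, hij, rfl⟩))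
    · exact Algebra.subset_adjoin (.inl (.inr ⟨i, j, rfl⟩))
    · rw [FockSpace.pairing_comm _ hJ, ← qVU_eq_pairing]
      exact neg_mem (Subalgebra.smul_mem _ (Algebra.subset_adjoin (.inl (.inr ⟨j, i, rfl⟩))) _)
    · exact Algebra.subset_adjoin (.inr ⟨i, j, rfl⟩)

end SymTensorExt

/-- The invariants of the diagonal `Sp(2n, ℂ)`-action on `Sym(V) ⊗ Λ(U)`, with
`V = (ℂ^{2n})^{⊕m}` and `U = (ℂ^{2n})^{⊕2r}`, are generated by the quadratic symplectic
pairings between two (distinct, if both in `V`) copies of `ℂ^{2n}` in `V` or in `U`. -/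
theorem stmt8 (n m r : ℕ) :
    Algebra.adjoin ℂ
      ({x | ∃ i j : Fin m, i ≠ j ∧ x = qVV n m r i j} ∪
       {x | ∃ (i : Fin m) (j : Fin (2 * r)), x = qVU n m r i j} ∪
       {x | ∃ i j : Fin (2 * r), x = qUU n m r i j})
      = spInvariants n m r := by
  rw [adjoin_quadratic_eq_pairingAlgebra]
  exact SetLike.coe_injective <|
    stmt8_general (symTensorExtFock n m r) fun g _ => isSubstitution_rho n m r g
end
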